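/- arXiv:2209.05028 — 7 statements merged into one kernel-verified Lean document; each statement's English description precedes it below -/
import Mathlib

section
/- In the multinomial assignment setting, write p_n = n^{-2} and suppose m(n)·p_n = c·n^{-a}·(1+o(1)) for some constant c > 0, where a = 1/k for some integer k ≥ 2. Then (k−1)·n·(1+o(1)) ≤ E[max_{σ ∈ S_n} Σ_{i=1}^n X_{iσ(i)}] ≤ k·n·(1+o(1)); that is, liminf_{n→∞} E[max_σ Σ_i X_{iσ(i)}]/n ≥ k−1 and limsup_{n→∞} E[max_σ Σ_i X_{iσ(i)}]/n ≤ k. -/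
open MeasureTheory Filter Real

noncomputable section

/-- The uniform measure on the `n × n` grid of cells. -/
def cellMeasure (n : ℕ) : Measure (Fin n × Fin n) :=
  ((n : ENNReal) ^ 2)⁻¹ • Measure.count

/-- The law of `m` i.i.d. points, each uniformly distributed on the `n × n` grid;
under this measure the matrix of cell counts is multinomial `M(m, n²)`. -/
def gridMeasure (m n : ℕ) : Measure (Fin m → Fin n × Fin n) :=
  Measure.pi fun _ => cellMeasure n

/-- `X_{ij}`: the number of the `m` points falling in cell `(i, j)`. -/
def cellCount {m n : ℕ} (i j : Fin n) (ω : Fin m → Fin n × Fin n) : ℕ :=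
  (Finset.univ.filter fun k => ω k = (i, j)).card

/-- The assignment sum `S(σ) = ∑ i, X_{i σ(i)}`. -/
def assignSum {m n : ℕ} (σ : Equiv.Perm (Fin n)) (ω : Fin m → Fin n × Fin n) : ℝ :=
  ∑ i, (cellCount i (σ i) ω : ℝ)

/-- `max_{σ ∈ S_n} S(σ)`. -/
def maxAssign {m n : ℕ} (ω : Fin m → Fin n × Fin n) : ℝ :=
  ⨆ σ : Equiv.Perm (Fin n), assignSum σ ω

/-- `min_{σ ∈ S_n} S(σ)`. -/
def minAssign {m n : ℕ} (ω : Fin m → Fin n × Fin n) : ℝ :=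
  ⨅ σ : Equiv.Perm (Fin n), assignSum σ ω

/-- `E[max_{σ ∈ S_n} S(σ)]`. -/
def EmaxAssign (m n : ℕ) : ℝ :=
  ∫ ω, maxAssign ω ∂(gridMeasure m n)

/-- `E[min_{σ ∈ S_n} S(σ)]`. -/
def EminAssign (m n : ℕ) : ℝ :=
  ∫ ω, minAssign ω ∂(gridMeasure m n)

instance cellProb (n : ℕ) [NeZero n] : IsProbabilityMeasure (cellMeasure n) := by
  constructor
  unfold cellMeasure
  have hn : (n : ENNReal) ≠ 0 := by exact_mod_cast NeZero.ne n
  rw [Measure.smul_apply, Measure.count_apply MeasurableSet.univ]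
  simp only [Set.encard_univ, smul_eq_mul]
  simp only [ENat.card_eq_coe_fintype_card, Fintype.card_prod, Fintype.card_fin]
  push_cast
  rw [← pow_two]
  exact ENNReal.inv_mul_cancel (by positivity) (by finiteness)

instance gridProb (m n : ℕ) [NeZero n] : IsProbabilityMeasure (gridMeasure m n) := by
  unfold gridMeasure; infer_instance

lemma grid_integrable {m n : ℕ} [NeZero n] (f : (Fin m → Fin n × Fin n) → ℝ) :
    Integrable f (gridMeasure m n) := Integrable.of_finite

lemma cell_singleton (n : ℕ) (c : Fin n × Fin n) :
    (cellMeasure n) {c} = ((n : ENNReal) ^ 2)⁻¹ := by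
  simp [cellMeasure]

/-- count of points in a cell -/
def cnt {m n : ℕ} (c : Fin n × Fin n) (ω : Fin m → Fin n × Fin n) : ℕ :=
  (Finset.univ.filter fun k => ω k = c).card

open Classical in
lemma grid_box {m n : ℕ} [NeZero n] (c c' : Fin n × Fin n) (T T' : Finset (Fin m))
    (h : Disjoint T T') :
    ∫ ω, (if (∀ t ∈ T, ω t = c) ∧ (∀ t ∈ T', ω t = c') then (1:ℝ) else 0) ∂(gridMeasure m n)
      = (((n:ℝ)^2)⁻¹) ^ (T.card + T'.card) := by
  have e : (fun ω : Fin m → Fin n × Fin n =>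
      (if (∀ t ∈ T, ω t = c) ∧ (∀ t ∈ T', ω t = c') then (1:ℝ) else 0)) =
      Set.indicator (Set.pi Set.univ fun t => if t ∈ T then {c} else if t ∈ T' then {c'} else Set.univ)
        (fun _ => (1:ℝ)) := by
    funext ω
    rw [Set.indicator_apply]
    congr 1
    simp only [Set.mem_pi, Set.mem_univ, true_implies, eq_iff_iff]
    constructor
    · rintro ⟨h1, h2⟩ t
      split_ifs with a b
      · exact h1 t a
      · exact h2 t b
      · trivial
    · intro H
      refine ⟨fun t ht => by simpa [ht] using H t, fun t ht => ?_⟩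
      have : t ∉ T := fun h' => Finset.disjoint_left.1 h h' ht
      simpa [ht, this] using H t
  rw [e, integral_indicator (Set.toFinite _).measurableSet]
  simp only [integral_const, smul_eq_mul, mul_one, Measure.real, Measure.restrict_apply MeasurableSet.univ,
    Set.univ_inter]
  rw [gridMeasure, Measure.pi_pi]
  have e2 : ∀ t : Fin m, (cellMeasure n) (if t ∈ T then {c} else if t ∈ T' then {c'} else Set.univ)
      = if t ∈ T ∪ T' then ((n : ENNReal) ^ 2)⁻¹ else 1 := by
    intro t
    by_cases a : t ∈ T
    · simp [a, cell_singleton]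
    · by_cases b : t ∈ T'
      · simp [a, b, cell_singleton]
      · simp [a, b]
  simp only [e2]
  rw [Finset.prod_ite_mem, Finset.univ_inter, Finset.prod_const, Finset.card_union_of_disjoint h]
  simp

open Classical in
lemma choose_cnt {m n : ℕ} (c : Fin n × Fin n) (s : ℕ) (ω : Fin m → Fin n × Fin n) :
    ((cnt c ω).choose s : ℝ) =
      ∑ T ∈ Finset.powersetCard s (Finset.univ : Finset (Fin m)),
        if (∀ t ∈ T, ω t = c) then (1:ℝ) else 0 := by
  rw [cnt, ← Finset.card_powersetCard, Finset.sum_boole]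
  congr 2
  ext T
  simp [Finset.mem_powersetCard, Finset.subset_iff, and_comm]

/-- factorial moment -/
def mom (m n s : ℕ) : ℝ := (m.choose s : ℝ) * (((n:ℝ)^2)⁻¹) ^ s

lemma mom_nonneg (m n s : ℕ) : 0 ≤ mom m n s := by unfold mom; positivity

lemma E_choose {m n : ℕ} [NeZero n] (c : Fin n × Fin n) (s : ℕ) :
    ∫ ω, ((cnt c ω).choose s : ℝ) ∂(gridMeasure m n) = mom m n s := by
  classical
  simp only [choose_cnt]
  rw [integral_finsetSum _ (fun _ _ => grid_integrable _)]
  have : ∀ T ∈ Finset.powersetCard s (Finset.univ : Finset (Fin m)),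
      ∫ ω, (if (∀ t ∈ T, ω t = c) then (1:ℝ) else 0) ∂(gridMeasure m n) = (((n:ℝ)^2)⁻¹) ^ s := by
    intro T hT
    have := grid_box c c T ∅ (by simp)
    simp only [Finset.notMem_empty, false_implies, implies_true, and_true, Finset.card_empty,
      add_zero, (Finset.mem_powersetCard.1 hT).2] at this
    exact this
  rw [Finset.sum_congr rfl this]
  simp [mom]

lemma E_choose_mul {m n : ℕ} [NeZero n] (c c' : Fin n × Fin n) (hcc : c ≠ c') (s : ℕ) :
    ∫ ω, ((cnt c ω).choose s : ℝ) * ((cnt c' ω).choose s : ℝ) ∂(gridMeasure m n)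
      ≤ (mom m n s)^2 := by
  classical
  rcases Nat.eq_zero_or_pos s with rfl | hs
  · simp [mom]
  simp only [choose_cnt, Finset.sum_mul_sum]
  rw [integral_finsetSum _ (fun _ _ => grid_integrable _)]
  simp only [integral_finsetSum _ (fun _ _ => grid_integrable _)]
  have : ∀ T ∈ Finset.powersetCard s (Finset.univ : Finset (Fin m)),
      ∀ T' ∈ Finset.powersetCard s (Finset.univ : Finset (Fin m)),
      ∫ ω, (if (∀ t ∈ T, ω t = c) then (1:ℝ) else 0) * (if (∀ t ∈ T', ω t = c') then (1:ℝ) else 0)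
        ∂(gridMeasure m n) ≤ (((n:ℝ)^2)⁻¹) ^ (s + s) := by
    intro T hT T' hT'
    by_cases hd : Disjoint T T'
    · have := grid_box c c' T T' hd
      rw [(Finset.mem_powersetCard.1 hT).2, (Finset.mem_powersetCard.1 hT').2] at this
      rw [← this]
      apply le_of_eq
      congr 1
      funext ω
      rw [ite_and]; split_ifs <;> simp
    · obtain ⟨t, h1, h2⟩ := Finset.not_disjoint_iff.1 hd
      have : ∀ ω : Fin m → Fin n × Fin n, (if (∀ t ∈ T, ω t = c) then (1:ℝ) else 0) *
          (if (∀ t ∈ T', ω t = c') then (1:ℝ) else 0) = 0 := by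
        intro ω
        by_cases h3 : ∀ t ∈ T, ω t = c
        · have : ¬ ∀ t ∈ T', ω t = c' := fun h => hcc ((h3 t h1).symm.trans (h t h2))
          simp only [this, if_false, mul_zero]
        · simp only [h3, if_false, zero_mul]
      simp only [this, integral_zero]
      positivity
  calc _ ≤ ∑ T ∈ Finset.powersetCard s (Finset.univ : Finset (Fin m)),
      ∑ T' ∈ Finset.powersetCard s (Finset.univ : Finset (Fin m)), (((n:ℝ)^2)⁻¹) ^ (s + s) :=
        Finset.sum_le_sum fun T hT => Finset.sum_le_sum fun T' hT' => this T hT T' hT'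
    _ = _ := by simp [mom]; ring

lemma ds_bound {n : ℕ} (D : Matrix (Fin n) (Fin n) ℝ) (hD : D ∈ doublyStochastic ℝ (Fin n))
    (x : Fin n → Fin n → ℝ) (M : ℝ) (hM : ∀ σ : Equiv.Perm (Fin n), ∑ i, x i (σ i) ≤ M) :
    ∑ i, ∑ j, D i j * x i j ≤ M := by
  obtain ⟨w, hw0, hw1, hw⟩ := exists_eq_sum_perm_of_mem_doublyStochastic hD
  have e : ∑ i, ∑ j, D i j * x i j = ∑ σ : Equiv.Perm (Fin n), w σ * ∑ i, x i (σ i) := by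
    rw [← hw]
    simp only [Matrix.sum_apply, Matrix.smul_apply, smul_eq_mul, Finset.sum_mul]
    simp only [Finset.mul_sum]
    rw [Finset.sum_comm' (t' := Finset.univ) (s' := fun _ => Finset.univ) (by simp)]
    simp_rw [Finset.sum_comm (s := (Finset.univ : Finset (Fin n))) (t := (Finset.univ : Finset (Equiv.Perm (Fin n))))]
    refine Finset.sum_congr rfl fun σ _ => ?_
    rw [Finset.sum_comm]
    refine Finset.sum_congr rfl fun i _ => ?_
    simp [Equiv.Perm.permMatrix, PEquiv.toMatrix_apply]
  rw [e]
  calc _ ≤ ∑ σ : Equiv.Perm (Fin n), w σ * M :=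
        Finset.sum_le_sum fun σ _ => mul_le_mul_of_nonneg_left (hM σ) (hw0 σ)
    _ = M := by rw [← Finset.sum_mul, hw1, one_mul]

lemma sub_bound {n : ℕ} (W : Fin n → Fin n → ℝ) (hW : ∀ i j, 0 ≤ W i j)
    (hr : ∀ i, ∑ j, W i j ≤ 1) (hcol : ∀ j, ∑ i, W i j ≤ 1)
    (x : Fin n → Fin n → ℝ) (hx : ∀ i j, 0 ≤ x i j)
    (M : ℝ) (hM : ∀ σ : Equiv.Perm (Fin n), ∑ i, x i (σ i) ≤ M) :
    ∑ i, ∑ j, W i j * x i j ≤ M := by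
  set s := ∑ i, ∑ j, W i j with hs
  have hs' : s = ∑ j, ∑ i, W i j := by rw [hs, Finset.sum_comm]
  set D : Matrix (Fin n) (Fin n) ℝ := fun i j =>
    W i j + (1 - ∑ j', W i j') * (1 - ∑ i', W i' j) / (n - s) with hDdef
  have hsum1 : ∑ i, (1 - ∑ j', W i j') = n - s := by simp [hs]
  have hsum2 : ∑ j, (1 - ∑ i', W i' j) = n - s := by simp [hs']
  have hns : 0 ≤ (n:ℝ) - s := by
    rw [← hsum1]; exact Finset.sum_nonneg fun i _ => sub_nonneg.2 (hr i)
  have hge : ∀ i j, W i j ≤ D i j := by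
    intro i j
    have := div_nonneg (mul_nonneg (sub_nonneg.2 (hr i)) (sub_nonneg.2 (hcol j))) hns
    simp only [hDdef]; linarith
  have hD : D ∈ doublyStochastic ℝ (Fin n) := by
    rw [mem_doublyStochastic_iff_sum]
    refine ⟨fun i j => (hW i j).trans (hge i j), fun i => ?_, fun j => ?_⟩
    · simp only [hDdef, Finset.sum_add_distrib, ← Finset.sum_div, ← Finset.mul_sum, hsum2]
      rcases hns.eq_or_lt with h0 | h0
      · have := (Finset.sum_eq_zero_iff_of_nonneg (fun i _ => sub_nonneg.2 (hr i))).1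
          (hsum1.trans h0.symm) i (Finset.mem_univ i)
        rw [this]; simp; linarith
      · field_simp; ring
    · simp only [hDdef, Finset.sum_add_distrib, ← Finset.sum_div, ← Finset.sum_mul, hsum1]
      rcases hns.eq_or_lt with h0 | h0
      · have := (Finset.sum_eq_zero_iff_of_nonneg (fun i _ => sub_nonneg.2 (hcol i))).1
          (hsum2.trans h0.symm) j (Finset.mem_univ j)
        rw [this]; simp; linarith
      · field_simp; ring
  refine le_trans ?_ (ds_bound D hD x M hM)
  exact Finset.sum_le_sum fun i _ => Finset.sum_le_sum fun j _ =>
    mul_le_mul_of_nonneg_right (hge i j) (hx i j)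

lemma key_max (d R C : ℝ) (hd : 0 < d) :
    1 - (max d R - d) / max d R - (max d C - d) / max d C ≤ d / max d (max R C) := by
  have h1 : 0 < max d R := lt_max_of_lt_left hd
  have h2 : 0 < max d C := lt_max_of_lt_left hd
  have e1 : (max d R - d) / max d R = 1 - d / max d R := by field_simp
  have e2 : (max d C - d) / max d C = 1 - d / max d C := by field_simp
  have l1 : d / max d R ≤ 1 := (div_le_one h1).2 (le_max_left _ _)
  have l2 : d / max d C ≤ 1 := (div_le_one h2).2 (le_max_left _ _)
  rw [e1, e2]
  rcases le_total R C with h | h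
  · rw [max_eq_right h]; linarith
  · rw [max_eq_left h]; linarith

lemma det_bound {n : ℕ} (Y : Fin n → Fin n → ℝ) (hY : ∀ i j, Y i j = 0 ∨ Y i j = 1)
    (d : ℝ) (hd : 0 < d)
    (M : ℝ) (hM : ∀ σ : Equiv.Perm (Fin n), ∑ i, Y i (σ i) ≤ M) :
    (∑ i, ∑ j, Y i j) - ∑ i, (max d (∑ j, Y i j) - d) - ∑ j, (max d (∑ i, Y i j) - d) ≤ d * M := by
  have hY0 : ∀ i j, 0 ≤ Y i j := fun i j => by rcases hY i j with h | h <;> simp [h]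
  set R := fun i => ∑ j, Y i j with hR
  set C := fun j => ∑ i, Y i j with hC
  have hR0 : ∀ i, 0 ≤ R i := fun i => Finset.sum_nonneg fun j _ => hY0 i j
  have hC0 : ∀ j, 0 ≤ C j := fun j => Finset.sum_nonneg fun i _ => hY0 i j
  have hpR : ∀ i, 0 < max d (R i) := fun i => lt_max_of_lt_left hd
  have hpC : ∀ i, 0 < max d (C i) := fun i => lt_max_of_lt_left hd
  have hp : ∀ i j, 0 < max d (max (R i) (C j)) := fun i j => lt_max_of_lt_left hd
  have main := sub_bound (fun i j => Y i j / max d (max (R i) (C j)))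
    (fun i j => div_nonneg (hY0 i j) (hp i j).le)
    (fun i => by
      calc ∑ j, Y i j / max d (max (R i) (C j)) ≤ ∑ j, Y i j / max d (R i) :=
            Finset.sum_le_sum fun j _ => div_le_div_of_nonneg_left (hY0 i j) (hpR i)
              (max_le_max_left _ (le_max_left _ _))
        _ = R i / max d (R i) := by rw [← Finset.sum_div]
        _ ≤ 1 := (div_le_one (hpR i)).2 (le_max_right _ _))
    (fun j => by
      calc ∑ i, Y i j / max d (max (R i) (C j)) ≤ ∑ i, Y i j / max d (C j) :=
            Finset.sum_le_sum fun i _ => div_le_div_of_nonneg_left (hY0 i j) (hpC j)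
              (max_le_max_left _ (le_max_right _ _))
        _ = C j / max d (C j) := by rw [← Finset.sum_div]
        _ ≤ 1 := (div_le_one (hpC j)).2 (le_max_right _ _))
    Y hY0 M hM
  refine le_trans ?_ (mul_le_mul_of_nonneg_left main hd.le)
  have aux : ∀ x : ℝ, 0 ≤ x → x * ((max d x - d) / max d x) ≤ max d x - d := by
    intro x hx
    have h0 : 0 < max d x := lt_max_of_lt_left hd
    rw [← mul_div_assoc, div_le_iff₀ h0, mul_comm]
    exact mul_le_mul_of_nonneg_left (le_max_right _ _) (sub_nonneg.2 (le_max_left _ _))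
  have a1 : ∑ i, ∑ j, Y i j * ((max d (R i) - d) / max d (R i)) ≤ ∑ i, (max d (R i) - d) := by
    refine Finset.sum_le_sum fun i _ => ?_
    rw [← Finset.sum_mul]; exact aux _ (hR0 i)
  have a2 : ∑ i, ∑ j, Y i j * ((max d (C j) - d) / max d (C j)) ≤ ∑ j, (max d (C j) - d) := by
    rw [Finset.sum_comm]
    refine Finset.sum_le_sum fun i _ => ?_
    rw [← Finset.sum_mul]; exact aux _ (hC0 i)
  have a3 : ∑ i, ∑ j, (Y i j - Y i j * ((max d (R i) - d) / max d (R i))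
      - Y i j * ((max d (C j) - d) / max d (C j))) ≤
      d * ∑ i, ∑ j, Y i j / max d (max (R i) (C j)) * Y i j := by
    simp only [Finset.mul_sum]
    refine Finset.sum_le_sum fun i _ => Finset.sum_le_sum fun j _ => ?_
    have k := key_max d (R i) (C j) hd
    rcases hY i j with h | h
    · simp [h]
    · rw [h]; simp only [one_mul, mul_one]; rw [mul_one_div]; exact k
  simp only [Finset.sum_sub_distrib] at a3 a1 a2 ⊢
  linarith

/-- indicator that a cell has at least `r` points -/
def Yind {m n : ℕ} (r : ℕ) (c : Fin n × Fin n) (ω : Fin m → Fin n × Fin n) : ℝ :=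
  if r ≤ cnt c ω then 1 else 0

lemma Yind_01 {m n : ℕ} (r : ℕ) (c : Fin n × Fin n) (ω : Fin m → Fin n × Fin n) :
    Yind r c ω = 0 ∨ Yind r c ω = 1 := by
  unfold Yind; split_ifs <;> simp

lemma Yind_nonneg {m n : ℕ} (r : ℕ) (c : Fin n × Fin n) (ω : Fin m → Fin n × Fin n) :
    0 ≤ Yind r c ω := by
  rcases Yind_01 r c ω with h | h <;> simp [h]

lemma Yind_le {m n : ℕ} (r : ℕ) (c : Fin n × Fin n) (ω : Fin m → Fin n × Fin n) :
    Yind r c ω ≤ ((cnt c ω).choose r : ℝ) := by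
  unfold Yind; split_ifs with h
  · exact_mod_cast Nat.choose_pos h
  · positivity

lemma Yind_ge {m n : ℕ} (r : ℕ) (c : Fin n × Fin n) (ω : Fin m → Fin n × Fin n) :
    ((cnt c ω).choose r : ℝ) - (r + 1) * ((cnt c ω).choose (r + 1) : ℝ) ≤ Yind r c ω := by
  unfold Yind
  set x := cnt c ω
  split_ifs with h
  · rcases h.eq_or_lt with h | h
    · simp [← h]
    · have e : ((x.choose (r+1) : ℕ) : ℝ) * (r + 1) = x.choose r * ((x - r : ℕ) : ℝ) := by
        exact_mod_cast Nat.choose_succ_right_eq x r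
      have : (1:ℝ) ≤ ((x - r : ℕ) : ℝ) := by exact_mod_cast (by omega : 1 ≤ x - r)
      nlinarith [(Nat.cast_nonneg (x.choose r) : (0:ℝ) ≤ _)]
  · rw [Nat.choose_eq_zero_of_lt (by omega), Nat.choose_eq_zero_of_lt (by omega)]; simp

lemma mom_succ (m n r : ℕ) : (r + 1) * mom m n (r + 1) ≤ mom m n r * (m * ((n:ℝ)^2)⁻¹) := by
  unfold mom
  have e : ((m.choose (r+1) : ℕ) : ℝ) * (r + 1) = m.choose r * ((m - r : ℕ) : ℝ) := by
    exact_mod_cast Nat.choose_succ_right_eq m r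
  have : ((m - r : ℕ) : ℝ) ≤ m := by exact_mod_cast Nat.sub_le m r
  calc (r + 1) * (((m.choose (r+1) : ℕ) : ℝ) * (((n:ℝ)^2)⁻¹)^(r+1))
      = (((m.choose (r+1) : ℕ) : ℝ) * (r+1)) * (((n:ℝ)^2)⁻¹)^(r+1) := by ring
    _ = (m.choose r * (((n:ℝ)^2)⁻¹)^(r+1)) * ((m - r : ℕ) : ℝ) := by rw [e]; ring
    _ ≤ (m.choose r * (((n:ℝ)^2)⁻¹)^(r+1)) * m := by gcongr
    _ = _ := by ring

lemma E_Y_le {m n : ℕ} [NeZero n] (r : ℕ) (c : Fin n × Fin n) :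
    ∫ ω, Yind r c ω ∂(gridMeasure m n) ≤ mom m n r := by
  rw [← E_choose c r]
  exact integral_mono (grid_integrable _) (grid_integrable _) (fun ω => Yind_le r c ω)

lemma E_Y_ge {m n : ℕ} [NeZero n] (r : ℕ) (c : Fin n × Fin n) :
    mom m n r * (1 - m * ((n:ℝ)^2)⁻¹) ≤ ∫ ω, Yind r c ω ∂(gridMeasure m n) := by
  have h := integral_mono (grid_integrable _) (grid_integrable _)
    (fun ω : Fin m → Fin n × Fin n => Yind_ge r c ω)
  rw [integral_sub (grid_integrable _) (grid_integrable _), integral_const_mul, E_choose,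
    E_choose] at h
  have := mom_succ m n r
  linarith

lemma E_YY_le {m n : ℕ} [NeZero n] (r : ℕ) (c c' : Fin n × Fin n) :
    ∫ ω, Yind r c ω * Yind r c' ω ∂(gridMeasure m n) ≤
      (mom m n r)^2 + if c = c' then mom m n r else 0 := by
  split_ifs with h
  · subst h
    have : ∀ ω : Fin m → Fin n × Fin n, Yind r c ω * Yind r c ω = Yind r c ω := by
      intro ω; rcases Yind_01 r c ω with h | h <;> simp [h]
    simp only [this]
    have := E_Y_le (m := m) r c
    nlinarith [sq_nonneg (mom m n r)]
  · rw [add_zero]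
    refine le_trans ?_ (E_choose_mul c c' h r)
    exact integral_mono (grid_integrable _) (grid_integrable _) (fun ω =>
      mul_le_mul (Yind_le r c ω) (Yind_le r c' ω) (Yind_nonneg _ _ _) (Nat.cast_nonneg _))

lemma var_bound {m n : ℕ} [NeZero n] (r : ℕ) (g : Fin n → Fin n × Fin n)
    (hg : Function.Injective g) :
    ∫ ω, ((∑ j, Yind r (g j) ω) - n * mom m n r)^2 ∂(gridMeasure m n) ≤
      n * mom m n r + 2 * (m * ((n:ℝ)^2)⁻¹) * (n * mom m n r)^2 := by
  set μ := mom m n r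
  have hμ : 0 ≤ μ := mom_nonneg _ _ _
  have e : ∀ ω : Fin m → Fin n × Fin n, ((∑ j, Yind r (g j) ω) - n * μ)^2 =
      (∑ i, ∑ j, Yind r (g i) ω * Yind r (g j) ω) - 2 * (n * μ) * (∑ j, Yind r (g j) ω)
        + (n * μ)^2 := by
    intro ω; rw [← Finset.sum_mul_sum]; ring
  simp only [e]
  rw [integral_add (grid_integrable _) (grid_integrable _),
    integral_sub (grid_integrable _) (grid_integrable _), integral_const_mul,
    integral_finsetSum _ (fun _ _ => grid_integrable _),
    integral_finsetSum _ (fun _ _ => grid_integrable _)]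
  simp only [integral_finsetSum _ (fun _ _ => grid_integrable _)]
  have h1 : ∑ i, ∑ j, ∫ ω, Yind r (g i) ω * Yind r (g j) ω ∂(gridMeasure m n) ≤
      n * μ + (n * μ)^2 := by
    calc _ ≤ ∑ i, ∑ j, (μ^2 + if i = j then μ else 0) := by
          refine Finset.sum_le_sum fun i _ => Finset.sum_le_sum fun j _ => ?_
          have := E_YY_le (m := m) r (g i) (g j)
          simpa only [hg.eq_iff] using this
      _ = _ := by simp [Finset.sum_add_distrib]; ring
  have h2 : n * (μ * (1 - m * ((n:ℝ)^2)⁻¹)) ≤ ∑ j, ∫ ω, Yind r (g j) ω ∂(gridMeasure m n) := by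
    calc n * (μ * (1 - m * ((n:ℝ)^2)⁻¹)) = ∑ j : Fin n, μ * (1 - m * ((n:ℝ)^2)⁻¹) := by simp
      _ ≤ _ := Finset.sum_le_sum fun j _ => E_Y_ge r (g j)
  have h3 := mul_le_mul_of_nonneg_left h2 (by positivity : 0 ≤ 2 * (n * μ))
  simp only [integral_const, probReal_univ, one_smul]
  nlinarith

lemma assign_le_max {m n : ℕ} (ω : Fin m → Fin n × Fin n) (σ : Equiv.Perm (Fin n)) :
    ∑ i, (cnt (i, σ i) ω : ℝ) ≤ maxAssign ω :=
  le_ciSup (f := fun σ : Equiv.Perm (Fin n) => assignSum σ ω) (Set.finite_range _).bddAbove σ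

lemma cnt_le_choose (x k : ℕ) : (x : ℝ) ≤ k + (x.choose (k + 1) : ℝ) := by
  have : x ≤ k + x.choose (k + 1) := by
    induction x with
    | zero => simp
    | succ x ih =>
      rw [Nat.choose_succ_succ, Nat.succ_eq_add_one]
      rcases le_or_gt k x with h | h
      · have := Nat.choose_pos h; omega
      · omega
  exact_mod_cast this

lemma maxAs_le {m n : ℕ} (k : ℕ) (ω : Fin m → Fin n × Fin n) :
    maxAssign ω ≤ n * k + ∑ i, ∑ j, ((cnt (i, j) ω).choose (k + 1) : ℝ) := by
  refine ciSup_le fun σ => ?_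
  calc assignSum σ ω = ∑ i, (cnt (i, σ i) ω : ℝ) := rfl
    _ ≤ ∑ i, ((k : ℝ) + ∑ j, ((cnt (i, j) ω).choose (k + 1) : ℝ)) := by
        refine Finset.sum_le_sum fun i _ => (cnt_le_choose _ k).trans ?_
        gcongr
        exact Finset.single_le_sum (f := fun j => ((cnt (i, j) ω).choose (k + 1) : ℝ))
          (fun _ _ => Nat.cast_nonneg _) (Finset.mem_univ (σ i))
    _ = _ := by simp [Finset.sum_add_distrib]

lemma mom_le (m n s : ℕ) : mom m n s ≤ (m * ((n:ℝ)^2)⁻¹)^s := by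
  unfold mom
  rw [mul_pow]
  gcongr
  exact_mod_cast Nat.choose_le_pow m s

lemma Emax_le (m n k : ℕ) [NeZero n] :
    EmaxAssign m n ≤ n * k + (n:ℝ)^2 * (m * ((n:ℝ)^2)⁻¹)^(k+1) := by
  unfold EmaxAssign
  refine (integral_mono (grid_integrable _) (grid_integrable _) (fun ω => maxAs_le k ω)).trans ?_
  rw [integral_add (grid_integrable _) (grid_integrable _),
    integral_finsetSum _ (fun _ _ => grid_integrable _)]
  simp only [integral_finsetSum _ (fun _ _ => grid_integrable _), E_choose]
  simp only [integral_const, probReal_univ, one_smul, Finset.sum_const, Finset.card_univ,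
    Fintype.card_fin, nsmul_eq_mul]
  have := mul_le_mul_of_nonneg_left (mom_le m n (k+1)) (by positivity : 0 ≤ (n:ℝ)^2)
  nlinarith

lemma Emax_nonneg (m n : ℕ) : 0 ≤ EmaxAssign m n := by
  refine integral_nonneg fun ω => ?_
  refine le_trans ?_ (assign_le_max ω 1)
  positivity

lemma pos_part_le (d x η : ℝ) (hd : 0 < d) (hη : 0 < η) :
    max d x - d ≤ η * d + (x - d)^2 / (4 * η * d) := by
  have h4 : 0 < 4 * η * d := by positivity
  have : 0 ≤ (x - d)^2 / (4 * η * d) := by positivity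
  rcases le_total x d with h | h
  · rw [max_eq_left h]; nlinarith [mul_pos hη hd]
  · rw [max_eq_right h]
    have : x - d - η * d ≤ (x - d)^2 / (4 * η * d) := by
      rw [le_div_iff₀ h4]
      nlinarith [sq_nonneg (x - d - 2 * (η * d))]
    linarith

lemma pt_lower {m n : ℕ} (r : ℕ) (hr : 0 < r) (d η : ℝ) (hd : 0 < d) (hη : 0 < η)
    (ω : Fin m → Fin n × Fin n) :
    (∑ i, ∑ j, Yind r (i, j) ω) - (∑ i, (η * d + ((∑ j, Yind r (i, j) ω) - d)^2 / (4 * η * d)))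
      - (∑ j, (η * d + ((∑ i, Yind r (i, j) ω) - d)^2 / (4 * η * d)))
      ≤ d / r * maxAssign ω := by
  have hr' : (0:ℝ) < r := by exact_mod_cast hr
  have h := det_bound (fun i j => Yind r (i, j) ω) (fun i j => Yind_01 _ _ _) d hd (maxAssign ω / r)
    (fun σ => by
      rw [le_div_iff₀ hr', Finset.sum_mul]
      refine le_trans (Finset.sum_le_sum fun i _ => ?_) (assign_le_max ω σ)
      unfold Yind
      split_ifs with h
      · rw [one_mul]; exact_mod_cast h
      · simp)
  have e : d / r * maxAssign ω = d * (maxAssign ω / r) := by ring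
  rw [e]
  refine le_trans ?_ h
  gcongr <;> exact pos_part_le _ _ _ hd hη

lemma Emax_ge (m n r : ℕ) [NeZero n] (hm : 0 < m) (hr : 0 < r) (hμ : 0 < mom m n r) :
    r * (n * (1 - m * ((n:ℝ)^2)⁻¹
      - 5 / 2 * √(1 / (n * mom m n r) + 2 * (m * ((n:ℝ)^2)⁻¹)))) ≤ EmaxAssign m n := by
  set μ := mom m n r with hμdef
  set lam := m * ((n:ℝ)^2)⁻¹ with hlam
  have hr' : (0:ℝ) < r := by exact_mod_cast hr
  have hn' : (0:ℝ) < n := by exact_mod_cast (NeZero.pos n)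
  have hm' : (0:ℝ) < m := by exact_mod_cast hm
  have hl : 0 < lam := by positivity
  set d := n * μ with hd'
  have hd : 0 < d := by positivity
  set v := 1 / d + 2 * lam with hv'
  have hv : 0 < v := by positivity
  set η := √v with hη'
  have hη : 0 < η := Real.sqrt_pos.2 hv
  have hηv : η * η = v := Real.mul_self_sqrt hv.le
  have h := integral_mono (grid_integrable _) (grid_integrable _)
    (fun ω : Fin m → Fin n × Fin n => pt_lower r hr d η hd hη ω)
  rw [integral_const_mul, integral_sub (grid_integrable _) (grid_integrable _),
    integral_sub (grid_integrable _) (grid_integrable _),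
    integral_finsetSum _ (fun _ _ => grid_integrable _),
    integral_finsetSum _ (fun _ _ => grid_integrable _),
    integral_finsetSum _ (fun _ _ => grid_integrable _)] at h
  have hS : n * (n * (μ * (1 - lam))) ≤
      ∑ i, ∫ ω, ∑ j, Yind r (i, j) ω ∂(gridMeasure m n) := by
    simp only [integral_finsetSum _ (fun _ _ => grid_integrable _)]
    calc n * (n * (μ * (1 - lam))) = ∑ i : Fin n, ∑ j : Fin n, μ * (1 - lam) := by simp
      _ ≤ _ := Finset.sum_le_sum fun i _ => Finset.sum_le_sum fun j _ => E_Y_ge r (i, j)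
  have hV : ∀ g : Fin n → Fin n × Fin n, Function.Injective g →
      ∫ ω, (η * d + ((∑ j, Yind r (g j) ω) - d)^2 / (4 * η * d)) ∂(gridMeasure m n)
        ≤ 5 / 4 * η * d := by
    intro g hg
    rw [integral_add (grid_integrable _) (grid_integrable _), integral_div]
    have := var_bound (m := m) r g hg
    simp only [integral_const, probReal_univ, one_smul]
    have h2 : (∫ ω, ((∑ j, Yind r (g j) ω) - d)^2 ∂(gridMeasure m n)) / (4 * η * d)
        ≤ 1 / 4 * η * d := by
      rw [div_le_iff₀ (by positivity)]
      calc _ ≤ d + 2 * lam * d^2 := this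
        _ = v * d^2 := by rw [hv']; field_simp
        _ = (1 / 4 * η * d) * (4 * η * d) := by rw [← hηv]; ring
    linarith
  have h1 : ∑ i, ∫ ω, (η * d + ((∑ j, Yind r (i, j) ω) - d)^2 / (4 * η * d)) ∂(gridMeasure m n)
      ≤ n * (5 / 4 * η * d) := by
    calc _ ≤ ∑ i : Fin n, 5 / 4 * η * d :=
          Finset.sum_le_sum fun i _ => hV (fun j => (i, j)) (fun a b h => by simpa using h)
      _ = _ := by simp
  have h2 : ∑ j, ∫ ω, (η * d + ((∑ i, Yind r (i, j) ω) - d)^2 / (4 * η * d)) ∂(gridMeasure m n)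
      ≤ n * (5 / 4 * η * d) := by
    calc _ ≤ ∑ i : Fin n, 5 / 4 * η * d :=
          Finset.sum_le_sum fun j _ => hV (fun i => (i, j)) (fun a b h => by simpa using h)
      _ = _ := by simp
  have h3 : d * (n * (1 - lam - 5 / 2 * η)) ≤ d / r * EmaxAssign m n := by
    unfold EmaxAssign
    refine le_trans ?_ h
    have : d * (n * (1 - lam - 5 / 2 * η)) = n * (n * (μ * (1 - lam))) - n * (5 / 4 * η * d)
      - n * (5 / 4 * η * d) := by rw [hd']; ring
    linarith
  have e : d / r * EmaxAssign m n = d * (EmaxAssign m n / r) := by ring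
  rw [e] at h3
  have h4 := le_of_mul_le_mul_left h3 hd
  rw [le_div_iff₀ hr'] at h4
  linarith

lemma mom_ge (m n r : ℕ) (hr : 2 * r ≤ m) :
    ((m * ((n:ℝ)^2)⁻¹) / 2)^r / r.factorial ≤ mom m n r := by
  have h := Nat.pow_le_choose (α := ℝ) r m
  unfold mom
  have h1 : ((m:ℝ)/2)^r / r.factorial ≤ m.choose r := by
    refine le_trans ?_ h
    gcongr
    have : (m:ℝ) ≤ 2 * ((m + 1 - r : ℕ) : ℝ) := by exact_mod_cast (by omega : m ≤ 2 * (m + 1 - r))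
    linarith
  calc ((m * ((n:ℝ)^2)⁻¹) / 2)^r / r.factorial
      = (((m:ℝ)/2)^r / r.factorial) * (((n:ℝ)^2)⁻¹)^r := by
        rw [mul_div_right_comm, mul_pow]; ring
    _ ≤ _ := by gcongr

/-- **Rather sparse matrices, irregular case `a = 1/k`.**  If `m(n) p_n = c n^{-1/k} (1 + o(1))`
with `c > 0` and an integer `k ≥ 2`, then
`(k-1) n (1 + o(1)) ≤ E[max_σ ∑ i, X_{i σ(i)}] ≤ k n (1 + o(1))`. -/
theorem expected_max_ratherSparse_irregular (m : ℕ → ℕ) (hm : ∀ n, 0 < m n) (c : ℝ)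
    (hc : 0 < c) (k : ℕ) (hk : 2 ≤ k)
    (hmp : Tendsto
      (fun n : ℕ => ((m n : ℝ) / (n : ℝ) ^ 2) / (c * (n : ℝ) ^ (-(1 / (k : ℝ)))))
      atTop (nhds 1)) :
    (k : ℝ) - 1 ≤ Filter.liminf (fun n : ℕ => EmaxAssign (m n) n / (n : ℝ)) atTop ∧
      Filter.limsup (fun n : ℕ => EmaxAssign (m n) n / (n : ℝ)) atTop ≤ (k : ℝ) := by
  obtain ⟨r, rfl⟩ : ∃ r, k = r + 1 := ⟨k - 1, by omega⟩
  have hr : 0 < r := by omega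
  have hr' : (0:ℝ) < r := by exact_mod_cast hr
  set K : ℝ := ((r + 1 : ℕ) : ℝ) with hK
  have hK0 : 0 < K := by rw [hK]; positivity
  set lam : ℕ → ℝ := fun n => m n * ((n:ℝ)^2)⁻¹ with hlam
  have hpow0 : Tendsto (fun n : ℕ => (n:ℝ) ^ (-(1 / K))) atTop (nhds 0) :=
    (tendsto_rpow_neg_atTop (by positivity)).comp tendsto_natCast_atTop_atTop
  have hl0 : Tendsto lam atTop (nhds 0) := by
    have h := hmp.mul (hpow0.const_mul c)
    rw [mul_zero, mul_zero] at h
    refine h.congr' ?_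
    filter_upwards [eventually_gt_atTop 0] with n hn
    have hn' : (0:ℝ) < n := by exact_mod_cast hn
    have : (n:ℝ) ^ (-(1 / K)) ≠ 0 := (Real.rpow_pos_of_pos hn' _).ne'
    simp only [hlam]
    field_simp
  have hnl : Tendsto (fun n : ℕ => n * lam n ^ (r + 1)) atTop (nhds (c ^ (r + 1))) := by
    have h := (hmp.pow (r + 1)).mul_const (c ^ (r + 1))
    rw [one_pow, one_mul] at h
    refine h.congr' ?_
    filter_upwards [eventually_gt_atTop 0] with n hn
    have hn' : (0:ℝ) < n := by exact_mod_cast hn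
    have e : ((n:ℝ) ^ (-(1 / K))) ^ (r + 1) = (n:ℝ)⁻¹ := by
      rw [← Real.rpow_natCast, ← Real.rpow_mul hn'.le, ← hK, neg_mul, one_div,
        inv_mul_cancel₀ hK0.ne', Real.rpow_neg_one]
    rw [div_pow, mul_pow, e]
    simp only [hlam]
    field_simp
  have hlpos : ∀ᶠ n : ℕ in atTop, 0 < lam n := by
    filter_upwards [eventually_gt_atTop 0] with n hn
    have hn' : (0:ℝ) < n := by exact_mod_cast hn
    have : (0:ℝ) < m n := by exact_mod_cast hm n
    simp only [hlam]; positivity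
  have hc' : 0 < c ^ (r + 1) := by positivity
  have hl0' : Tendsto lam atTop (nhdsWithin 0 (Set.Ioi 0)) :=
    tendsto_nhdsWithin_iff.2 ⟨hl0, hlpos⟩
  have hinv : Tendsto (fun n => (lam n)⁻¹) atTop atTop := tendsto_inv_nhdsGT_zero.comp hl0'
  have hnr : Tendsto (fun n : ℕ => n * lam n ^ r) atTop atTop := by
    refine (hnl.pos_mul_atTop hc' hinv).congr' ?_
    filter_upwards [hlpos] with n hn
    field_simp
    ring
  have hmT : Tendsto (fun n => (m n : ℝ)) atTop atTop := by
    refine tendsto_atTop_mono' _ ?_ hnr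
    filter_upwards [hlpos, hl0.eventually_lt_const one_pos, eventually_gt_atTop 0] with n h1 h2 hn
    have hn' : (1:ℝ) ≤ n := by exact_mod_cast hn
    have e : (m n : ℝ) = n * (n * lam n) := by simp only [hlam]; field_simp
    have : lam n ^ r ≤ lam n := by
      simpa using pow_le_pow_of_le_one h1.le h2.le hr
    calc n * lam n ^ r ≤ n * lam n := by gcongr
      _ ≤ n * (n * lam n) := by
        have : 0 ≤ n * lam n := by positivity
        nlinarith
      _ = m n := e.symm
  have hm2 : ∀ᶠ n in atTop, 2 * r ≤ m n := by
    filter_upwards [hmT.eventually_ge_atTop ((2 * r : ℕ) : ℝ)] with n hn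
    exact_mod_cast hn
  set q : ℕ → ℝ := fun n => n * mom (m n) n r with hq
  have hqT : Tendsto q atTop atTop := by
    have h := hnr.atTop_mul_const (show (0:ℝ) < 1 / 2^r / r.factorial by positivity)
    refine tendsto_atTop_mono' _ ?_ h
    filter_upwards [hm2] with n hn
    have := mom_ge (m n) n r hn
    calc n * lam n ^ r * (1 / 2^r / r.factorial) = n * ((lam n / 2)^r / r.factorial) := by
          rw [div_pow]; ring
      _ ≤ q n := by simp only [hq, hlam]; gcongr
  have hU : ∀ᶠ n : ℕ in atTop, EmaxAssign (m n) n / n ≤ K + n * lam n ^ (r + 1) * lam n := by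
    filter_upwards [eventually_gt_atTop 0] with n hn
    have hn' : (0:ℝ) < n := by exact_mod_cast hn
    have : NeZero n := ⟨hn.ne'⟩
    rw [div_le_iff₀ hn']
    refine (Emax_le (m n) n (r + 1)).trans (le_of_eq ?_)
    simp only [hlam]; rw [← hK]; ring
  have hUT : Tendsto (fun n : ℕ => K + n * lam n ^ (r + 1) * lam n) atTop (nhds K) := by
    have := (hnl.mul hl0).const_add K
    simpa using this
  set low : ℕ → ℝ := fun n => r * (1 - lam n - 5 / 2 * √(1 / q n + 2 * lam n)) with hlow
  have hL : ∀ᶠ n : ℕ in atTop, low n ≤ EmaxAssign (m n) n / n := by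
    filter_upwards [eventually_gt_atTop 0, hqT.eventually_gt_atTop 0] with n hn hqn
    have hn' : (0:ℝ) < n := by exact_mod_cast hn
    have : NeZero n := ⟨hn.ne'⟩
    rw [le_div_iff₀ hn']
    have hμ : 0 < mom (m n) n r := pos_of_mul_pos_right hqn hn'.le
    refine le_trans (le_of_eq ?_) (Emax_ge (m n) n r (hm n) hr hμ)
    simp only [hlow, hq, hlam]; ring
  have hLT : Tendsto low atTop (nhds r) := by
    have h1 : Tendsto (fun n => 1 / q n + 2 * lam n) atTop (nhds 0) := by
      have := hqT.inv_tendsto_atTop.add (hl0.const_mul 2)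
      simpa using this
    have h2 := (Real.continuous_sqrt.tendsto 0).comp h1
    rw [Real.sqrt_zero] at h2
    have h3 := ((hl0.const_sub 1).sub (h2.const_mul (5/2))).const_mul (r:ℝ)
    simpa [hlow] using h3
  have hbU : IsBoundedUnder (· ≤ ·) atTop (fun n : ℕ => EmaxAssign (m n) n / (n:ℝ)) :=
    hUT.isBoundedUnder_le.mono_le hU
  have hbL : IsBoundedUnder (· ≥ ·) atTop (fun n : ℕ => EmaxAssign (m n) n / (n:ℝ)) :=
    hLT.isBoundedUnder_ge.mono_ge hL
  constructor
  · have := liminf_le_liminf hL hLT.isBoundedUnder_ge hbU.isCoboundedUnder_ge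
    rw [hLT.liminf_eq] at this
    rw [hK]; push_cast; linarith
  · have := limsup_le_limsup hU hbL.isCoboundedUnder_le hUT.isBoundedUnder_le
    rwa [hUT.limsup_eq] at this

end
end

section
/- In the multinomial assignment setting, suppose m(n) → ∞ and m(n)/n → 0 as n → ∞. Then E[max_{σ ∈ S_n} Σ_{i=1}^n X_{iσ(i)}] = m(n)·(1+o(1)); that is, E[max_σ Σ_i X_{iσ(i)}]/m(n) → 1 as n → ∞. -/
open MeasureTheory Filter Real

noncomputable section

instance gridAux_cell (n : ℕ) [NeZero n] : IsProbabilityMeasure (cellMeasure n) := by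
  constructor
  have hn : (n : ENNReal) ≠ 0 := by exact_mod_cast NeZero.ne n
  have h2 : (n : ENNReal) ^ 2 ≠ 0 := pow_ne_zero _ hn
  have h3 : (n : ENNReal) ^ 2 ≠ ⊤ := by finiteness
  simp only [cellMeasure, Measure.smul_apply, smul_eq_mul, Measure.count_univ]
  simp only [ENat.card_eq_coe_fintype_card, Fintype.card_prod, Fintype.card_fin]
  push_cast
  rw [← pow_two]
  exact ENNReal.inv_mul_cancel h2 h3

instance gridAux_grid (m n : ℕ) [NeZero n] : IsProbabilityMeasure (gridMeasure m n) := by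
  unfold gridMeasure; infer_instance

lemma assignSum_eq {m n : ℕ} (σ : Equiv.Perm (Fin n)) (ω : Fin m → Fin n × Fin n) :
    assignSum σ ω = ((Finset.univ.filter fun k => σ (ω k).1 = (ω k).2).card : ℝ) := by
  unfold assignSum cellCount
  rw [← Nat.cast_sum]
  congr 1
  rw [Finset.card_eq_sum_card_fiberwise (f := fun k => (ω k).1) (t := Finset.univ)
    (fun _ _ => Finset.mem_coe.2 (Finset.mem_univ _))]
  refine Finset.sum_congr rfl fun i _ => ?_
  congr 1
  ext k
  simp only [Finset.mem_filter, Finset.mem_univ, true_and, Prod.ext_iff]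
  constructor
  · rintro ⟨rfl, h⟩; exact ⟨h.symm, rfl⟩
  · rintro ⟨h, rfl⟩; exact ⟨rfl, h.symm⟩

lemma maxAssign_le {m n : ℕ} (ω : Fin m → Fin n × Fin n) : maxAssign ω ≤ m := by
  refine ciSup_le fun σ => ?_
  rw [assignSum_eq]
  have := Finset.card_le_univ (Finset.univ.filter fun k => σ (ω k).1 = (ω k).2)
  rw [Fintype.card_fin] at this
  exact_mod_cast this

def coll {m n : ℕ} (p : Fin n × Fin n → Fin n) (k l : Fin m) (ω : Fin m → Fin n × Fin n) : ℝ :=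
  Set.indicator {ω : Fin m → Fin n × Fin n | k ≠ l ∧ p (ω k) = p (ω l)} 1 ω

lemma coll_nonneg {m n : ℕ} (p : Fin n × Fin n → Fin n) (k l : Fin m)
    (ω : Fin m → Fin n × Fin n) : 0 ≤ coll p k l ω :=
  Set.indicator_nonneg (fun _ _ => zero_le_one) _

lemma le_maxAssign {m n : ℕ} (ω : Fin m → Fin n × Fin n) :
    (m : ℝ) - ∑ k : Fin m, ∑ l : Fin m, (coll Prod.fst k l ω + coll Prod.snd k l ω)
      ≤ maxAssign ω := by
  classical
  let G : Fin m → Prop := fun k => ∀ l, k ≠ l → (ω k).1 ≠ (ω l).1 ∧ (ω k).2 ≠ (ω l).2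
  obtain ⟨σ, hσ⟩ := Equiv.Perm.exists_extending_pair (fun k : {k // G k} => (ω k).1)
    (fun k : {k // G k} => (ω k).2)
    (fun a b h => by
      by_contra hab
      exact (a.2 b (fun h => hab (Subtype.ext h))).1 h)
    (fun a b h => by
      by_contra hab
      exact (a.2 b (fun h => hab (Subtype.ext h))).2 h)
  have h1 : assignSum σ ω ≤ maxAssign ω :=
    le_ciSup (f := fun σ => assignSum σ ω) (Set.finite_range _).bddAbove σ
  refine le_trans ?_ h1
  rw [assignSum_eq, sub_le_iff_le_add]
  have h2 : ((Finset.univ.filter fun k => σ (ω k).1 = (ω k).2).card : ℝ)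
      = ∑ k : Fin m, if σ (ω k).1 = (ω k).2 then (1 : ℝ) else 0 := by simp
  have h3 : (m : ℝ) = ∑ k : Fin m, (1 : ℝ) := by simp
  rw [h2, h3, ← Finset.sum_add_distrib]
  refine Finset.sum_le_sum fun k _ => ?_
  have hnn : ∀ l ∈ Finset.univ, 0 ≤ coll Prod.fst k l ω + coll Prod.snd k l ω :=
    fun l _ => add_nonneg (coll_nonneg _ _ _ _) (coll_nonneg _ _ _ _)
  by_cases hG : G k
  · rw [if_pos (hσ ⟨k, hG⟩)]
    linarith [Finset.sum_nonneg hnn]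
  · have : ∃ l, k ≠ l ∧ ((ω k).1 = (ω l).1 ∨ (ω k).2 = (ω l).2) := by
      by_contra hc
      push Not at hc
      exact hG hc
    obtain ⟨l, hkl, hl⟩ := this
    have h4 := Finset.single_le_sum hnn (Finset.mem_univ l)
    have h5 : 1 ≤ coll Prod.fst k l ω + coll Prod.snd k l ω := by
      rcases hl with hl | hl
      · have : coll Prod.fst k l ω = 1 := Set.indicator_of_mem (by exact ⟨hkl, hl⟩) _
        linarith [coll_nonneg Prod.snd k l ω]
      · have : coll Prod.snd k l ω = 1 := Set.indicator_of_mem (by exact ⟨hkl, hl⟩) _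
        linarith [coll_nonneg Prod.fst k l ω]
    have h6 : (0 : ℝ) ≤ if σ (ω k).1 = (ω k).2 then (1 : ℝ) else 0 := by positivity
    linarith

lemma coll_integral {m n : ℕ} [NeZero n] (p : Fin n × Fin n → Fin n)
    (hp : ∀ a, (Finset.univ.filter fun x => p x = a).card = n) (k l : Fin m) :
    ∫ ω, coll p k l ω ∂(gridMeasure m n) ≤ 1 / n := by
  unfold coll
  rw [integral_indicator_one (Set.toFinite _).measurableSet]
  have hn0 : (n : ℝ) ≠ 0 := by exact_mod_cast NeZero.ne n
  by_cases hkl : k = l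
  · simp [hkl]
  have hind : ProbabilityTheory.IndepFun (fun ω : Fin m → Fin n × Fin n => ω k)
      (fun ω => ω l) (gridMeasure m n) :=
    (ProbabilityTheory.iIndepFun_pi (μ := fun _ : Fin m => cellMeasure n) (X := fun _ => id)
      (fun _ => aemeasurable_id)).indepFun hkl
  have hmarg : ∀ (j : Fin m) (a : Fin n),
      (gridMeasure m n).real ((fun ω => ω j) ⁻¹' {x | p x = a}) = 1 / n := by
    intro j a
    have := (measurePreserving_eval (fun _ : Fin m => cellMeasure n) j).measure_preimage
      (Set.toFinite {x | p x = a}).measurableSet.nullMeasurableSet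
    rw [measureReal_def]
    unfold gridMeasure
    erw [this]
    have hc : (Measure.count {x | p x = a} : ENNReal) = n := by
      rw [Measure.count_apply_finite _ (Set.toFinite _)]
      congr 1
      refine Eq.trans ?_ (hp a)
      congr 1
      ext x; simp
    simp only [cellMeasure, Measure.smul_apply, smul_eq_mul, hc]
    simp
    field_simp
  have hset : {ω : Fin m → Fin n × Fin n | k ≠ l ∧ p (ω k) = p (ω l)}
      ⊆ ⋃ a ∈ (Finset.univ : Finset (Fin n)), ((fun ω : Fin m → Fin n × Fin n => ω k) ⁻¹' {x | p x = a} ∩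
        (fun ω => ω l) ⁻¹' {x | p x = a}) := by
    rintro ω ⟨_, h⟩
    simp [h]
  refine (measureReal_mono hset (measure_ne_top _ _)).trans ((measureReal_biUnion_finset_le _ _).trans ?_)
  have : ∀ a : Fin n, (gridMeasure m n).real
      ((fun ω : Fin m → Fin n × Fin n => ω k) ⁻¹' {x | p x = a} ∩
        (fun ω => ω l) ⁻¹' {x | p x = a}) = 1 / n * (1 / n) := by
    intro a
    rw [← hmarg k a]
    nth_rw 2 [hmarg k a]
    rw [← hmarg l a]
    simp only [measureReal_def]
    rw [hind.measure_inter_preimage_eq_mul _ _ (Set.toFinite _).measurableSet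
      (Set.toFinite _).measurableSet, ENNReal.toReal_mul]
  simp only [this, Finset.sum_const, Finset.card_univ, Fintype.card_fin, nsmul_eq_mul]
  apply le_of_eq
  field_simp

lemma Emax_le_s8 (m n : ℕ) [NeZero n] : EmaxAssign m n ≤ m := by
  unfold EmaxAssign
  calc _ ≤ ∫ _, (m : ℝ) ∂(gridMeasure m n) :=
        integral_mono (.of_finite) (.of_finite) (fun ω => maxAssign_le ω)
    _ = m := by simp

lemma le_Emax (m n : ℕ) [NeZero n] : (m : ℝ) - m * m * (2 / n) ≤ EmaxAssign m n := by
  unfold EmaxAssign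
  refine le_trans ?_ (integral_mono (.of_finite) (.of_finite) (fun ω => le_maxAssign ω))
  rw [integral_sub .of_finite .of_finite]
  rw [integral_finsetSum _ fun _ _ => .of_finite]
  have h : ∀ k ∈ Finset.univ, ∫ ω, ∑ l : Fin m, (coll Prod.fst k l ω + coll Prod.snd k l ω) ∂(gridMeasure m n)
      ≤ m * (2 / n) := by
    intro k _
    rw [integral_finsetSum _ fun _ _ => .of_finite]
    have : ∀ l ∈ Finset.univ, ∫ ω, (coll Prod.fst k l ω + coll Prod.snd k l ω) ∂(gridMeasure m n)
        ≤ 2 / n := by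
      intro l _
      rw [integral_add .of_finite .of_finite]
      have h1 := coll_integral (m := m) (n := n) Prod.fst (fun a => by
        have : (Finset.univ.filter fun x : Fin n × Fin n => x.1 = a) = {a} ×ˢ Finset.univ := by
          ext ⟨x, y⟩; simp [eq_comm]
        rw [this]; simp) k l
      have h2 := coll_integral (m := m) (n := n) Prod.snd (fun a => by
        have : (Finset.univ.filter fun x : Fin n × Fin n => x.2 = a) = Finset.univ ×ˢ {a} := by
          ext ⟨x, y⟩; simp [eq_comm]
        rw [this]; simp) k l
      calc _ ≤ 1 / (n : ℝ) + 1 / n := add_le_add h1 h2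
        _ = 2 / n := by ring
    refine (Finset.sum_le_sum this).trans ?_
    simp
  have h' := Finset.sum_le_sum h
  simp only [Finset.sum_const, Finset.card_univ, Fintype.card_fin, nsmul_eq_mul] at h'
  simp only [integral_const, probReal_univ, one_smul]
  linarith

/-- **Very sparse matrices.**  If `1 ≪ m(n) ≪ n`, then
`E[max_σ ∑ i, X_{i σ(i)}] = m(n) (1 + o(1))`. -/
theorem expected_max_verySparse (m : ℕ → ℕ) (hm : ∀ n, 0 < m n)
    (hm_top : Tendsto (fun n : ℕ => (m n : ℝ)) atTop atTop)
    (hmn : Tendsto (fun n : ℕ => (m n : ℝ) / (n : ℝ)) atTop (nhds 0)) :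
    Tendsto (fun n : ℕ => EmaxAssign (m n) n / (m n : ℝ)) atTop (nhds 1) := by
  have hlow : Tendsto (fun n : ℕ => 1 - 2 * ((m n : ℝ) / (n : ℝ))) atTop (nhds 1) := by
    simpa using (hmn.const_mul 2).const_sub 1
  refine tendsto_of_tendsto_of_tendsto_of_le_of_le' hlow tendsto_const_nhds ?_ ?_
  · filter_upwards [eventually_gt_atTop 0] with n hn
    have : NeZero n := ⟨hn.ne'⟩
    have hmpos : (0 : ℝ) < m n := by exact_mod_cast hm n
    rw [le_div_iff₀ hmpos]
    refine le_trans (le_of_eq ?_) (le_Emax (m n) n)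
    ring
  · filter_upwards [eventually_gt_atTop 0] with n hn
    have : NeZero n := ⟨hn.ne'⟩
    have hmpos : (0 : ℝ) < m n := by exact_mod_cast hm n
    rw [div_le_one hmpos]
    exact Emax_le_s8 (m n) n

end
end

section
/- Let N₁, N₂, m be positive integers and let X = (X_j)_{1≤j≤N₁+N₂} be a random vector with the multinomial distribution M(m, N₁+N₂), i.e., X_j counts how many of m i.i.d. uniform random draws from {1,…,N₁+N₂} equal j. Let X^{(1)} = (X_j)_{1≤j≤N₁}. Let 1 ≤ q ≤ N₂ and let 𝒥 be a random subset of (N₁, N₁+N₂] of cardinality q that is a (measurable) function of X^{(1)}. Then the random variable max_{j∈𝒥} X_j has the same distribution as max_{N₁<j≤N₁+q} X_j. -/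
open MeasureTheory Filter

noncomputable section

/-- The law of `m` i.i.d. draws, each uniformly distributed on `Fin N`; under this measure
the vector of counts `(drawCount j)_{j}` is multinomial `M(m, N)`. -/
def uniformDraws (m N : ℕ) : Measure (Fin m → Fin N) :=
  Measure.pi fun _ => ((N : ENNReal))⁻¹ • Measure.count

/-- `X_j`: the number of the `m` draws equal to `j`. -/
def drawCount {m N : ℕ} (j : Fin N) (ω : Fin m → Fin N) : ℕ :=
  (Finset.univ.filter fun k => ω k = j).card

theorem exists_perm_aux (N₁ N₂ q : ℕ) (hq2 : q ≤ N₂) (T : Finset (Fin (N₁ + N₂)))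
    (hT : ∀ j ∈ T, N₁ ≤ (j : ℕ)) (hc : T.card = q) :
    ∃ σ : Equiv.Perm (Fin (N₁ + N₂)), (∀ j : Fin (N₁ + N₂), (j : ℕ) < N₁ → σ j = j) ∧
      (Finset.univ.filter fun j : Fin (N₁ + N₂) =>
        N₁ ≤ (j : ℕ) ∧ (j : ℕ) < N₁ + q).map σ.toEmbedding = T := by
  classical
  set A := Finset.univ.filter fun j : Fin (N₁ + N₂) => N₁ ≤ (j : ℕ) ∧ (j : ℕ) < N₁ + q with hA
  have hAc : A.card = q := by
    have : A.map Fin.valEmbedding = Finset.Ico N₁ (N₁ + q) := by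
      ext k
      simp only [hA, Finset.mem_map, Finset.mem_filter, Finset.mem_univ, true_and,
        Fin.valEmbedding_apply, Finset.mem_Ico]
      constructor
      · rintro ⟨a, h, rfl⟩
        exact h
      · intro h
        exact ⟨⟨k, by omega⟩, h, rfl⟩
    rw [← Finset.card_map Fin.valEmbedding, this]
    simp
  let e : A ≃ T := Finset.equivOfCardEq (hAc.trans hc.symm)
  let f : Fin (N₁ + N₂) → Fin (N₁ + N₂) := fun j => if h : j ∈ A then (e ⟨j, h⟩ : Fin _) else j
  have hfA : ∀ j (h : j ∈ A), f j = e ⟨j, h⟩ := fun j h => by simp [f, h]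
  have hfn : ∀ j, j ∉ A → f j = j := fun j h => by simp [f, h]
  have hAlt : ∀ j : Fin (N₁ + N₂), (j : ℕ) < N₁ → j ∉ A := fun j h h' => by
    simp [hA] at h'; omega
  have hor : ∀ j : Fin (N₁ + N₂), (j : ℕ) < N₁ + q → (j : ℕ) < N₁ ∨ j ∈ A := fun j h => by
    simp [hA]; omega
  have hinj : Set.InjOn f {j | (j : ℕ) < N₁ + q} := by
    intro a ha b hb hab
    rcases hor a ha with h1 | h1 <;> rcases hor b hb with h2 | h2
    · rwa [hfn a (hAlt a h1), hfn b (hAlt b h2)] at hab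
    · rw [hfn a (hAlt a h1), hfA b h2] at hab
      have := hT _ (e ⟨b, h2⟩).2
      rw [← hab] at this; omega
    · rw [hfA a h1, hfn b (hAlt b h2)] at hab
      have := hT _ (e ⟨a, h1⟩).2
      rw [hab] at this; omega
    · rw [hfA a h1, hfA b h2] at hab
      have := e.injective (Subtype.ext hab)
      simpa using this
  obtain ⟨g, hg⟩ := Set.MapsTo.exists_equiv_extend_of_card_eq (t := Finset.univ)
    (s := {j : Fin (N₁ + N₂) | (j : ℕ) < N₁ + q}) (f := f) (by simp) (by intro x _; simp) hinj
  let σ : Equiv.Perm (Fin (N₁ + N₂)) := g.trans (Equiv.subtypeUnivEquiv (by simp))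
  have hσ : ∀ j : Fin (N₁ + N₂), (j : ℕ) < N₁ + q → σ j = f j := fun j h => hg j h
  refine ⟨σ, fun j h => ?_, ?_⟩
  · rw [hσ j (by omega), hfn j (hAlt j h)]
  · apply Finset.eq_of_subset_of_card_le
    · intro k hk
      obtain ⟨a, ha, rfl⟩ := Finset.mem_map.1 hk
      have h2 : (a : ℕ) < N₁ + q := by simp [hA] at ha; omega
      simp only [Equiv.coe_toEmbedding]
      rw [hσ a h2, hfA a ha]
      exact (e ⟨a, ha⟩).2
    · rw [Finset.card_map, hAc, hc]

theorem map_uniformDraws_aux (m N : ℕ) (hN : 0 < N) (Φ : (Fin m → Fin N) → (Fin m → Fin N))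
    (hΦ : Function.Injective Φ) :
    Measure.map Φ (uniformDraws m N) = uniformDraws m N := by
  have hb : Function.Bijective Φ := Finite.injective_iff_bijective.1 hΦ
  have hfin : IsFiniteMeasure ((N : ENNReal)⁻¹ • (Measure.count : Measure (Fin N))) := by
    refine ⟨?_⟩
    rw [Measure.smul_apply, smul_eq_mul]
    refine ENNReal.mul_lt_top ?_ (measure_lt_top _ _)
    simp [hN]
  have hs : ∀ ω, uniformDraws m N {ω} = ((N : ENNReal)⁻¹) ^ m := by
    intro ω
    rw [uniformDraws, Measure.pi_singleton]
    simp
  refine Measure.ext_of_singleton fun ω => ?_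
  obtain ⟨ω', rfl⟩ := hb.2 ω
  rw [Measure.map_apply (measurable_of_finite _) (measurableSet_singleton _)]
  have : Φ ⁻¹' {Φ ω'} = {ω'} := by
    ext x; simp [hΦ.eq_iff]
  rw [this, hs, hs]

theorem drawCount_perm_aux {m N : ℕ} (σ : Equiv.Perm (Fin N)) (j : Fin N) (ω : Fin m → Fin N) :
    drawCount (σ j) (fun k => σ (ω k)) = drawCount j ω := by
  simp [drawCount]

/-- **Lemma on random index sets.**  Let `X = (X_j)_{1 ≤ j ≤ N₁+N₂}` be multinomial
`M(m, N₁+N₂)` and let `𝒥` be a random subset of the second block `(N₁, N₁+N₂]` of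
cardinality `q` (`1 ≤ q ≤ N₂`) determined by `X⁽¹⁾ = (X_j)_{j ≤ N₁}`.  Then
`max_{j ∈ 𝒥} X_j` and `max_{N₁ < j ≤ N₁+q} X_j` are equidistributed. -/
theorem max_over_random_set_distribution (N₁ N₂ m q : ℕ)
    (hN₁ : 0 < N₁) (hN₂ : 0 < N₂) (hm : 0 < m) (hq1 : 1 ≤ q) (hq2 : q ≤ N₂)
    (J : (Fin N₁ → ℕ) → Finset (Fin (N₁ + N₂)))
    (hJmem : ∀ x : Fin N₁ → ℕ, ∀ j ∈ J x, N₁ ≤ (j : ℕ))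
    (hJcard : ∀ x : Fin N₁ → ℕ, (J x).card = q) :
    Measure.map
      (fun ω : Fin m → Fin (N₁ + N₂) =>
        (J fun i : Fin N₁ => drawCount (Fin.castAdd N₂ i) ω).sup fun j => drawCount j ω)
      (uniformDraws m (N₁ + N₂)) =
    Measure.map
      (fun ω : Fin m → Fin (N₁ + N₂) =>
        (Finset.univ.filter fun j : Fin (N₁ + N₂) => N₁ ≤ (j : ℕ) ∧ (j : ℕ) < N₁ + q).sup
          fun j => drawCount j ω)
      (uniformDraws m (N₁ + N₂)) := by
  choose σ hfix hmap using fun x => exists_perm_aux N₁ N₂ q hq2 (J x) (hJmem x) (hJcard x)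
  let X : (Fin m → Fin (N₁ + N₂)) → Fin N₁ → ℕ := fun ω i => drawCount (Fin.castAdd N₂ i) ω
  let Φ : (Fin m → Fin (N₁ + N₂)) → (Fin m → Fin (N₁ + N₂)) := fun ω k => σ (X ω) (ω k)
  have hX : ∀ ω, X (Φ ω) = X ω := by
    intro ω
    funext i
    have h := drawCount_perm_aux (σ (X ω)) (Fin.castAdd N₂ i) ω
    rw [hfix (X ω) (Fin.castAdd N₂ i) (by simp)] at h
    exact h
  have hinj : Function.Injective Φ := by
    intro a b hab
    have h1 : X a = X b := by rw [← hX a, ← hX b, hab]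
    funext k
    have h2 : σ (X a) (a k) = σ (X b) (b k) := congrFun hab k
    rw [h1] at h2
    exact (σ (X b)).injective h2
  conv_lhs => rw [← map_uniformDraws_aux m (N₁ + N₂) (by omega) Φ hinj]
  rw [Measure.map_map (measurable_of_finite _) (measurable_of_finite _)]
  congr 1
  funext ω
  change (J (X (Φ ω))).sup (fun j => drawCount j (Φ ω)) = _
  rw [hX, ← hmap (X ω), Finset.sup_map]
  refine Finset.sup_congr rfl fun j _ => ?_
  exact drawCount_perm_aux (σ (X ω)) j ω

end
end

section
/- For each n, let (X_j^{(n)})_{1≤j≤n} be negatively associated random variables, each with the binomial distribution B(m(n), p(n)), where the parameters satisfy m(n)·p(n)/log n → c for some constant c > 0 and p(n)·log n → 0 as n → ∞. Let H* = H*(c) be the unique H > 1 with H log H − (H−1) = 1/c. Then E[max_{1≤j≤n} X_j^{(n)}] = c·H*·log n·(1+o(1)); that is, E[max_{1≤j≤n} X_j^{(n)}]/(c·H*·log n) → 1 as n → ∞. -/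
open MeasureTheory Filter Real

noncomputable section

/-- The binomial distribution `B(m, p)` as a measure on `ℝ`:
it assigns mass `C(m,k) pᵏ (1-p)^{m-k}` to the point `k`, for `0 ≤ k ≤ m`. -/
def binomialMeasure (m : ℕ) (p : ℝ) : Measure ℝ :=
  ∑ k ∈ Finset.range (m + 1),
    ENNReal.ofReal ((m.choose k : ℝ) * p ^ k * (1 - p) ^ (m - k)) • Measure.dirac (k : ℝ)

/-- Random variables `X_i`, `i : ι`, are *negatively associated* if for every pair of disjoint
finite index sets `I`, `J` and every pair of bounded measurable coordinatewise nondecreasing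
functions `f`, `g`, one has `Cov(f(X_I), g(X_J)) ≤ 0`, i.e.
`E[f(X_I) g(X_J)] ≤ E[f(X_I)] E[g(X_J)]`. -/
def NegativelyAssociated {Ω : Type*} [MeasurableSpace Ω] (μ : Measure Ω)
    {ι : Type*} (X : ι → Ω → ℝ) : Prop :=
  ∀ I J : Finset ι, Disjoint I J →
    ∀ f : (I → ℝ) → ℝ, ∀ g : (J → ℝ) → ℝ,
      Measurable f → Measurable g → Monotone f → Monotone g →
      (∃ C, ∀ x, |f x| ≤ C) → (∃ C, ∀ x, |g x| ≤ C) →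
      ∫ ω, f (fun i => X i.1 ω) * g (fun j => X j.1 ω) ∂μ ≤
        (∫ ω, f (fun i => X i.1 ω) ∂μ) * ∫ ω, g (fun j => X j.1 ω) ∂μ

lemma aux_w_nonneg {m k : ℕ} {p : ℝ} (hp : p ∈ Set.Ioo (0:ℝ) 1) :
    0 ≤ (m.choose k : ℝ) * p ^ k * (1 - p) ^ (m - k) := by
  have h1 := hp.1
  have h2 : 0 < 1 - p := by linarith [hp.2]
  positivity

lemma aux_integrable (m : ℕ) (p : ℝ) (φ : ℝ → ℝ) :
    Integrable φ (binomialMeasure m p) := by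
  unfold binomialMeasure
  rw [integrable_finset_sum_measure]
  intro k _
  refine Integrable.smul_measure ?_ ENNReal.ofReal_ne_top
  exact integrable_dirac (by simp)

lemma aux_integral (m : ℕ) {p : ℝ} (hp : p ∈ Set.Ioo (0:ℝ) 1) (φ : ℝ → ℝ) :
    ∫ x, φ x ∂(binomialMeasure m p) = ∑ k ∈ Finset.range (m + 1),
      (m.choose k : ℝ) * p ^ k * (1 - p) ^ (m - k) * φ k := by
  unfold binomialMeasure
  rw [integral_finset_sum_measure]
  · refine Finset.sum_congr rfl fun k _ => ?_
    rw [integral_smul_measure, integral_dirac, ENNReal.toReal_ofReal (aux_w_nonneg hp), smul_eq_mul]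
  · intro k _
    refine Integrable.smul_measure ?_ ENNReal.ofReal_ne_top
    exact integrable_dirac (by simp)

lemma aux_mgf (m : ℕ) {p : ℝ} (hp : p ∈ Set.Ioo (0:ℝ) 1) (t : ℝ) :
    ∫ x, exp (t * x) ∂(binomialMeasure m p) ≤ exp (m * p * (exp t - 1)) := by
  rw [aux_integral m hp]
  have : ∑ k ∈ Finset.range (m + 1),
      (m.choose k : ℝ) * p ^ k * (1 - p) ^ (m - k) * exp (t * k) = (p * exp t + (1 - p)) ^ m := by
    rw [add_pow]
    refine Finset.sum_congr rfl fun k _ => ?_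
    rw [mul_pow, ← Real.exp_nat_mul, mul_comm t]
    ring
  rw [this, mul_assoc, Real.exp_nat_mul]
  have h1 := hp.1
  have h2 : 0 < 1 - p := by linarith [hp.2]
  refine pow_le_pow_left₀ (by positivity) ?_ m
  have := Real.add_one_le_exp (p * (exp t - 1))
  linarith

lemma aux_ae (m : ℕ) (p : ℝ) : ∀ᵐ x : ℝ ∂(binomialMeasure m p), 0 ≤ x ∧ x ≤ (m:ℝ) := by
  unfold binomialMeasure
  rw [ae_iff]
  rw [Measure.finset_sum_apply]
  refine Finset.sum_eq_zero fun k hk => ?_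
  have hk' : (k:ℝ) ≤ m := by exact_mod_cast (Nat.lt_succ_iff.1 (Finset.mem_range.1 hk))
  simp [Measure.dirac_apply]
  exact Or.inr (by exact_mod_cast hk')

lemma aux_tail (m k : ℕ) (hk : k ≤ m) {p : ℝ} (hp : p ∈ Set.Ioo (0:ℝ) 1) :
    ∫ x, (Set.Iio (k:ℝ)).indicator (fun _ => (1:ℝ)) x ∂(binomialMeasure m p) ≤
      1 - (m.choose k : ℝ) * p ^ k * (1 - p) ^ (m - k) := by
  rw [aux_integral m hp]
  have h1 : ∑ j ∈ Finset.range (m + 1), (m.choose j : ℝ) * p ^ j * (1 - p) ^ (m - j) = 1 := by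
    have := add_pow p (1 - p) m
    rw [add_sub_cancel, one_pow] at this
    refine Eq.trans ?_ this.symm
    refine Finset.sum_congr rfl fun j _ => ?_
    ring
  have hmem : k ∈ Finset.range (m + 1) := Finset.mem_range.2 (by omega)
  rw [← Finset.add_sum_erase _ _ hmem] at h1 ⊢
  have : ∑ j ∈ (Finset.range (m + 1)).erase k, (m.choose j : ℝ) * p ^ j * (1 - p) ^ (m - j) *
      (Set.Iio (k:ℝ)).indicator (fun _ => (1:ℝ)) (j:ℝ) ≤
      ∑ j ∈ (Finset.range (m + 1)).erase k, (m.choose j : ℝ) * p ^ j * (1 - p) ^ (m - j) := by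
    refine Finset.sum_le_sum fun j _ => ?_
    refine mul_le_of_le_one_right (aux_w_nonneg hp) ?_
    refine Set.indicator_le' (fun _ _ => le_rfl) (fun _ _ => zero_le_one) _
  simp only [Set.mem_Iio, lt_self_iff_false, not_false_eq_true, Set.indicator_of_notMem, mul_zero]
  linarith

lemma aux_NA {Ω : Type*} [MeasurableSpace Ω] (μ : Measure Ω) [IsProbabilityMeasure μ]
    {ι : Type*} (X : ι → Ω → ℝ) (h : NegativelyAssociated μ X) (u : ℝ → ℝ)
    (hu : Antitone u) (hm : Measurable u) (h0 : ∀ x, 0 ≤ u x) (h1 : ∀ x, u x ≤ 1) (I : Finset ι) :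
    ∫ ω, ∏ i ∈ I, u (X i ω) ∂μ ≤ ∏ i ∈ I, ∫ ω, u (X i ω) ∂μ := by
  classical
  induction I using Finset.induction_on with
  | empty => simp
  | insert a I ha ih =>
    have key := h {a} I (by simpa using ha) (fun x => - u (x ⟨a, by simp⟩))
      (fun x => - ∏ i : I, u (x i)) (by fun_prop) (by fun_prop)
      (fun x y hxy => neg_le_neg (hu (hxy _)))
      (fun x y hxy => neg_le_neg (Finset.prod_le_prod (fun _ _ => h0 _) (fun i _ => hu (hxy i))))
      ⟨1, fun x => by rw [abs_neg, abs_of_nonneg (h0 _)]; exact h1 _⟩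
      ⟨1, fun x => by
        rw [abs_neg, abs_of_nonneg (Finset.prod_nonneg fun _ _ => h0 _)]
        exact Finset.prod_le_one (fun _ _ => h0 _) (fun _ _ => h1 _)⟩
    simp only [neg_mul_neg, integral_neg] at key
    have e : ∀ ω, ∏ i : I, u (X i.1 ω) = ∏ i ∈ I, u (X i ω) := fun ω =>
      Finset.prod_coe_sort I (fun i => u (X i ω))
    simp only [e] at key
    simp only [Finset.prod_insert ha]
    exact key.trans (mul_le_mul_of_nonneg_left ih (integral_nonneg fun _ => h0 _))

section
variable {Ω : Type*} [MeasurableSpace Ω] {μ : Measure Ω} [IsProbabilityMeasure μ]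
  {n m : ℕ} {p : ℝ} {X : Fin n → Ω → ℝ}

lemma aux_ae_all (hmeas : ∀ j, Measurable (X j))
    (hlaw : ∀ j, Measure.map (X j) μ = binomialMeasure m p) :
    ∀ᵐ ω ∂μ, ∀ j, 0 ≤ X j ω ∧ X j ω ≤ m := by
  rw [ae_all_iff]
  intro j
  have := aux_ae m p
  rw [← hlaw j] at this
  exact ae_of_ae_map (hmeas j).aemeasurable this

lemma aux_int_map (hmeas : ∀ j, Measurable (X j))
    (hlaw : ∀ j, Measure.map (X j) μ = binomialMeasure m p) (j : Fin n) (φ : ℝ → ℝ)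
    (hφ : Measurable φ) : Integrable (fun ω => φ (X j ω)) μ ∧
      ∫ ω, φ (X j ω) ∂μ = ∫ x, φ x ∂(binomialMeasure m p) := by
  have := aux_integrable m p φ
  rw [← hlaw j] at this ⊢
  exact ⟨this.comp_measurable (hmeas j), (integral_map (hmeas j).aemeasurable
    hφ.aestronglyMeasurable).symm⟩

lemma aux_S_integrable (hn : 0 < n) (hmeas : ∀ j, Measurable (X j))
    (hlaw : ∀ j, Measure.map (X j) μ = binomialMeasure m p) :
    Integrable (fun ω => ⨆ j, X j ω) μ := by
  haveI : Nonempty (Fin n) := ⟨⟨0, hn⟩⟩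
  refine Integrable.of_bound (C := m) (Measurable.iSup hmeas).aestronglyMeasurable ?_
  filter_upwards [aux_ae_all hmeas hlaw] with ω hω
  obtain ⟨j, hj⟩ := exists_eq_ciSup_of_finite (f := fun j => X j ω)
  rw [← hj, Real.norm_eq_abs, abs_of_nonneg (hω j).1]
  exact (hω j).2

lemma aux_upper (hn : 0 < n) (hp : p ∈ Set.Ioo (0:ℝ) 1) (hmeas : ∀ j, Measurable (X j))
    (hlaw : ∀ j, Measure.map (X j) μ = binomialMeasure m p) (t : ℝ) :
    t * ∫ ω, ⨆ j, X j ω ∂μ ≤ log n + m * p * (exp t - 1) := by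
  haveI : Nonempty (Fin n) := ⟨⟨0, hn⟩⟩
  have hn' : (0:ℝ) < n := by exact_mod_cast hn
  set B := m * p * (exp t - 1) with hB
  set A := (n:ℝ) * exp B with hA
  have hA0 : 0 < A := by positivity
  have hlogA : log A = log n + B := by
    rw [hA, Real.log_mul hn'.ne' (exp_pos _).ne', Real.log_exp]
  have hI : ∀ j, Integrable (fun ω => exp (t * X j ω)) μ := fun j =>
    (aux_int_map hmeas hlaw j (fun x => exp (t * x)) (by fun_prop)).1
  have hE : ∀ j, ∫ ω, exp (t * X j ω) ∂μ ≤ exp B := fun j => by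
    rw [(aux_int_map hmeas hlaw j (fun x => exp (t * x)) (by fun_prop)).2]
    exact aux_mgf m hp t
  have hs := integrable_finset_sum Finset.univ (fun j _ => hI j)
  have pt : ∀ ω, t * ⨆ j, X j ω ≤ (log A - 1) + (∑ j, exp (t * X j ω)) / A := by
    intro ω
    obtain ⟨j, hj⟩ := exists_eq_ciSup_of_finite (f := fun j => X j ω)
    rw [← hj]
    have h1 := Real.add_one_le_exp (t * X j ω - log A)
    rw [Real.exp_sub, Real.exp_log hA0] at h1
    have h2 : exp (t * X j ω) ≤ ∑ j, exp (t * X j ω) :=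
      Finset.single_le_sum (f := fun j => exp (t * X j ω)) (fun _ _ => (exp_pos _).le)
        (Finset.mem_univ j)
    have h3 := div_le_div_of_nonneg_right h2 hA0.le
    linarith
  rw [← integral_const_mul]
  have := integral_mono ((aux_S_integrable hn hmeas hlaw).const_mul t)
    ((integrable_const (log A - 1)).add (hs.div_const A)) pt
  refine this.trans ?_
  simp only [Pi.add_apply]
  rw [integral_add (integrable_const _) (hs.div_const A), integral_div, integral_finset_sum _ (fun j _ => hI j)]
  have h5 : ∑ j, ∫ ω, exp (t * X j ω) ∂μ ≤ A := by
    refine (Finset.sum_le_sum fun j _ => hE j).trans ?_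
    simp [hA]
  have h6 := (div_le_one hA0).2 h5
  simp only [integral_const, probReal_univ, one_smul]
  linarith

lemma aux_lower (hn : 0 < n) (hp : p ∈ Set.Ioo (0:ℝ) 1) (hmeas : ∀ j, Measurable (X j))
    (hlaw : ∀ j, Measure.map (X j) μ = binomialMeasure m p) (hNA : NegativelyAssociated μ X)
    (k : ℕ) (hk : k ≤ m) :
    k * (1 - exp (- (n * ((m.choose k : ℝ) * p ^ k * (1 - p) ^ (m - k))))) ≤ 
      ∫ ω, ⨆ j, X j ω ∂μ := by
  haveI : Nonempty (Fin n) := ⟨⟨0, hn⟩⟩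
  set q := (m.choose k : ℝ) * p ^ k * (1 - p) ^ (m - k) with hq
  set u : ℝ → ℝ := (Set.Iio (k:ℝ)).indicator (fun _ => (1:ℝ)) with hu
  have hum : Measurable u := measurable_const.indicator measurableSet_Iio
  have h0 : ∀ x, 0 ≤ u x := fun x => Set.indicator_nonneg (fun _ _ => zero_le_one) x
  have h1 : ∀ x, u x ≤ 1 := fun x =>
    Set.indicator_le' (fun _ _ => le_rfl) (fun _ _ => zero_le_one) _
  have hanti : Antitone u := by
    intro x y hxy
    by_cases hy : y < k
    · have hx : x < k := lt_of_le_of_lt hxy hy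
      simp [hu, hx, hy]
    · have : u y = 0 := by simp [hu, not_lt.1 hy]
      rw [this]; exact h0 x
  have hE : ∀ j, ∫ ω, u (X j ω) ∂μ ≤ exp (-q) := fun j => by
    rw [(aux_int_map hmeas hlaw j u hum).2]
    refine (aux_tail m k hk hp).trans ?_
    have := Real.add_one_le_exp (-q)
    linarith
  have hP : ∫ ω, ∏ j, u (X j ω) ∂μ ≤ exp (-(n * q)) := by
    refine (aux_NA μ X hNA u hanti hum h0 h1 Finset.univ).trans ?_
    refine (Finset.prod_le_prod (fun _ _ => integral_nonneg fun _ => h0 _)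
      (fun j _ => hE j)).trans ?_
    simp [← Real.exp_nat_mul]
  have hPi : Integrable (fun ω => ∏ j, u (X j ω)) μ := by
    refine Integrable.of_bound (C := 1) (Measurable.aestronglyMeasurable (by fun_prop)) ?_
    refine Eventually.of_forall fun ω => ?_
    rw [Real.norm_eq_abs, abs_of_nonneg (Finset.prod_nonneg fun _ _ => h0 _)]
    exact Finset.prod_le_one (fun _ _ => h0 _) (fun _ _ => h1 _)
  have hmono : ∫ ω, ((k:ℝ) - k * ∏ j, u (X j ω)) ∂μ ≤ ∫ ω, ⨆ j, X j ω ∂μ := by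
    refine integral_mono_ae ((integrable_const _).sub (hPi.const_mul _))
      (aux_S_integrable hn hmeas hlaw) ?_
    filter_upwards [aux_ae_all hmeas hlaw] with ω hω
    have hle : ∀ j, X j ω ≤ ⨆ j, X j ω := fun j =>
      le_ciSup (f := fun j => X j ω) (Set.finite_range _).bddAbove j
    by_cases hall : ∀ j, X j ω < k
    · have : ∏ j, u (X j ω) = 1 := Finset.prod_eq_one fun j _ => by simp [hu, hall j]
      rw [this]
      have := hle ⟨0, hn⟩
      have := (hω ⟨0, hn⟩).1
      linarith
    · push Not at hall
      obtain ⟨j, hj⟩ := hall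
      have : ∏ j, u (X j ω) = 0 :=
        Finset.prod_eq_zero (Finset.mem_univ j) (by simp [hu, hj])
      rw [this]
      have := hle j
      linarith
  refine le_trans ?_ hmono
  rw [integral_sub (integrable_const _) (hPi.const_mul _), integral_const_mul]
  simp only [integral_const, probReal_univ, one_smul]
  have := mul_le_mul_of_nonneg_left hP (Nat.cast_nonneg (α := ℝ) k)
  linarith
end

lemma aux_fact (k : ℕ) (hk : 1 ≤ k) :
    log (k.factorial : ℝ) ≤ (k + 1) * log k - k + 1 := by
  induction k, hk using Nat.le_induction with
  | base => simp
  | succ k hk ih =>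
    have hk0 : (0:ℝ) < k := by exact_mod_cast hk
    rw [Nat.factorial_succ, Nat.cast_mul, Real.log_mul (by positivity) (by positivity)]
    push_cast
    have h := Real.one_sub_inv_le_log_of_pos (x := ((k:ℝ) + 1) / k) (by positivity)
    rw [Real.log_div (by positivity) (by positivity)] at h
    have e : 1 - (((k:ℝ) + 1) / k)⁻¹ = 1 / (k + 1) := by field_simp; ring
    rw [e, div_le_iff₀ (by positivity)] at h
    nlinarith

lemma aux_logq (m k : ℕ) (hk : 1 ≤ k) (hkm : k < m) {p : ℝ} (hp : p ∈ Set.Ioo (0:ℝ) 1) :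
    k * log ((m * p - k * p) / k) + k - 1 - log k - m * p * (1 - p)⁻¹ ≤
      log ((m.choose k : ℝ) * p ^ k * (1 - p) ^ (m - k)) := by
  have h1 := hp.1
  have h2 : 0 < 1 - p := by linarith [hp.2]
  have hk0 : (0:ℝ) < k := by exact_mod_cast hk
  have hmk : (0:ℝ) < m - k := by rw [sub_pos]; exact_mod_cast hkm
  have hch : (0:ℝ) < m.choose k := by exact_mod_cast Nat.choose_pos hkm.le
  have hf := aux_fact k hk
  rw [Real.log_mul (by positivity) (by positivity), Real.log_mul (by positivity) (by positivity),
    Real.log_pow, Real.log_pow, ← sub_mul, Real.log_div (by positivity) (by positivity),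
    Real.log_mul (by positivity) (by positivity)]
  have hA : ((m:ℝ) - k) ^ k ≤ k.factorial * m.choose k := by
    have a := Nat.pow_sub_le_descFactorial m k
    rw [Nat.descFactorial_eq_factorial_mul_choose] at a
    have b : (((m + 1 - k : ℕ):ℝ)) ^ k ≤ k.factorial * m.choose k := by exact_mod_cast a
    refine le_trans (pow_le_pow_left₀ hmk.le ?_ k) b
    rw [Nat.cast_sub (by omega)]; push_cast; linarith
  have hB := Real.log_le_log (by positivity) hA
  rw [Real.log_pow, Real.log_mul (by positivity) (by positivity)] at hB
  have hC := Real.one_sub_inv_le_log_of_pos h2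
  have hC' : 1 - (1 - p)⁻¹ = - (p * (1-p)⁻¹) := by field_simp; ring
  rw [hC'] at hC
  have hD : ((m - k : ℕ):ℝ) * log (1 - p) ≥ - (m * p * (1 - p)⁻¹) := by
    have : ((m - k : ℕ):ℝ) ≤ m := by exact_mod_cast Nat.sub_le m k
    have i1 := mul_le_mul_of_nonneg_left hC (Nat.cast_nonneg (α := ℝ) (m - k))
    have i2 : 0 ≤ p * (1-p)⁻¹ := by positivity
    nlinarith
  nlinarith

lemma aux_h {H' H : ℝ} (h1 : 1 < H') (h2 : H' < H) :
    H' * log H' - (H' - 1) < H * log H - (H - 1) := by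
  have hH' : 0 < H' := by linarith
  have hH : 0 < H := by linarith
  have h := Real.one_sub_inv_le_log_of_pos (x := H / H') (by positivity)
  rw [Real.log_div (by positivity) (by positivity), inv_div] at h
  have h3 := mul_le_mul_of_nonneg_left h (by positivity : 0 ≤ H)
  have h4 : H * (1 - H' / H) = H - H' := by field_simp
  have := Real.log_pos h1
  nlinarith

/-- asymptotics -/
lemma aux_asym (m : ℕ → ℕ) (p : ℕ → ℝ)
    (hp : ∀ n, p n ∈ Set.Ioo (0 : ℝ) 1) (c : ℝ) (hc : 0 < c)
    (hmp : Tendsto (fun n : ℕ => (m n : ℝ) * p n / Real.log n) atTop (nhds c))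
    (hplog : Tendsto (fun n : ℕ => p n * Real.log n) atTop (nhds 0))
    (H : ℝ) (hH : 1 < H) (hlt : H * log H - (H - 1) < 1 / c) :
    ∃ k : ℕ → ℕ, Tendsto (fun n => (k n : ℝ) / log n) atTop (nhds (c * H)) ∧
      (∀ᶠ n in atTop, k n ≤ m n) ∧
      Tendsto (fun n : ℕ => (n:ℝ) * (((m n).choose (k n) : ℝ) * p n ^ (k n) *
        (1 - p n) ^ (m n - k n))) atTop atTop := by
  have hL : Tendsto (fun n : ℕ => log (n:ℝ)) atTop atTop :=
    Real.tendsto_log_atTop.comp tendsto_natCast_atTop_atTop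
  have hLpos : ∀ᶠ n : ℕ in atTop, 0 < log (n:ℝ) := hL.eventually_gt_atTop 0
  have hcH : 0 < c * H := by positivity
  refine ⟨fun n => ⌈c * H * log n⌉₊, ?_⟩
  set k : ℕ → ℕ := fun n => ⌈c * H * log n⌉₊ with hk
  have hkL : Tendsto (fun n => (k n : ℝ) / log n) atTop (nhds (c * H)) :=
    (tendsto_nat_ceil_mul_div_atTop hcH.le).comp hL
  have hktop : Tendsto (fun n => (k n : ℝ)) atTop atTop := by
    refine tendsto_atTop_mono (fun n => Nat.le_ceil _) (hL.const_mul_atTop hcH)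
  have hLi : Tendsto (fun n : ℕ => (log (n:ℝ))⁻¹) atTop (nhds 0) := hL.inv_tendsto_atTop
  have hp0 : Tendsto p atTop (nhds 0) := by
    have := hplog.mul hLi
    rw [zero_mul] at this
    refine this.congr' ?_
    filter_upwards [hLpos] with n hn
    field_simp
  have hkpos : ∀ᶠ n in atTop, 1 ≤ k n := by
    filter_upwards [hktop.eventually_ge_atTop 1] with n hn
    exact_mod_cast hn
  have hratio : Tendsto (fun n => ((m n : ℝ) * p n - k n * p n) / k n) atTop (nhds H⁻¹) := by
    have := (hmp.sub (hkL.mul hp0)).div hkL hcH.ne'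
    rw [mul_zero, sub_zero, show c / (c * H) = H⁻¹ by field_simp] at this
    refine this.congr' ?_
    filter_upwards [hLpos, hkpos] with n hn hk1
    have : (0:ℝ) < k n := by exact_mod_cast hk1
    simp only [Pi.div_apply]
    field_simp
  have hHinv : 0 < H⁻¹ := by positivity
  have hkm : ∀ᶠ n in atTop, k n < m n := by
    filter_upwards [hratio.eventually (lt_mem_nhds hHinv), hkpos] with n h1 hk1
    have hk0 : (0:ℝ) < k n := by exact_mod_cast hk1
    rw [← sub_mul] at h1
    have h2 : 0 < ((m n : ℝ) - k n) * p n := by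
      by_contra hcon
      exact absurd h1 (not_lt.2 (div_nonpos_of_nonpos_of_nonneg (not_lt.1 hcon) hk0.le))
    have h3 := (pos_iff_pos_of_mul_pos h2).2 (hp n).1
    have : (k n : ℝ) < m n := by linarith
    exact_mod_cast this
  refine ⟨hkL, hkm.mono fun n h => h.le, ?_⟩
  -- lower bound on log, over L
  have hlogk : Tendsto (fun n => log (k n : ℝ) / log n) atTop (nhds 0) := by
    have h1 : Tendsto (fun x : ℝ => log x / x) atTop (nhds 0) := by
      simpa using Real.isLittleO_log_id_atTop.tendsto_div_nhds_zero
    have := (h1.comp hktop).mul hkL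
    rw [zero_mul] at this
    refine this.congr' ?_
    filter_upwards [hLpos, hkpos] with n hn hk1
    have : (0:ℝ) < k n := by exact_mod_cast hk1
    simp only [Function.comp]
    field_simp
  have h1p : Tendsto (fun n => (1 - p n)⁻¹) atTop (nhds 1) := by
    have := (tendsto_const_nhds (x := (1:ℝ)).sub hp0).inv₀ (by norm_num)
    simpa using this
  have hlogr := hratio.log hHinv.ne'
  set δ := 1 - c * (H * log H - (H - 1)) with hδ
  have hδ0 : 0 < δ := by
    rw [lt_div_iff₀ hc] at hlt
    rw [hδ]; linarith
  have hmain : Tendsto (fun n : ℕ => 1 + (k n : ℝ) / log n * log (((m n : ℝ) * p n - k n * p n) / k n)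
      + (k n : ℝ) / log n - (log (n:ℝ))⁻¹ - log (k n : ℝ) / log n
      - (m n : ℝ) * p n / log n * (1 - p n)⁻¹) atTop (nhds δ) := by
    have := ((((tendsto_const_nhds (x := (1:ℝ))).add (hkL.mul hlogr)).add hkL).sub hLi).sub hlogk |>.sub (hmp.mul h1p)
    convert this using 2
    rw [Real.log_inv, hδ]; ring
  have hprod := Tendsto.pos_mul_atTop hδ0 hmain hL
  refine tendsto_atTop_mono' _ ?_ (Real.tendsto_exp_atTop.comp hprod)
  filter_upwards [hLpos, hkpos, hkm, eventually_gt_atTop 0] with n hn hk1 hkm1 hn0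
  have hn' : (0:ℝ) < n := by exact_mod_cast hn0
  have hq := aux_logq (m n) (k n) hk1 hkm1 (hp n)
  have h1 := (hp n).1
  have h2 : 0 < 1 - p n := by linarith [(hp n).2]
  have hch : (0:ℝ) < (m n).choose (k n) := by exact_mod_cast Nat.choose_pos hkm1.le
  simp only [Function.comp]
  rw [← Real.le_log_iff_exp_le (by positivity), Real.log_mul hn'.ne' (by positivity)]
  refine le_trans (le_of_eq ?_) (add_le_add_right hq _)
  field_simp
  ring

/-- **Critical zone for negatively associated binomial maxima.**  If for each `n` the
variables `X^{(n)}_1, …, X^{(n)}_n` are negatively associated, each `B(m(n), p(n))`,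
with `m(n) p(n) / log n → c > 0` and `p(n) log n → 0`, and `H* > 1` is the unique solution
of `H log H - (H-1) = 1/c`, then `E[max_j X^{(n)}_j] = c H* log n (1 + o(1))`. -/
theorem expected_max_NA_binomial_critical (m : ℕ → ℕ) (p : ℕ → ℝ)
    (hp : ∀ n, p n ∈ Set.Ioo (0 : ℝ) 1)
    (Ω : ℕ → Type*) [mΩ : ∀ n, MeasurableSpace (Ω n)] (μ : ∀ n, Measure (Ω n))
    [hμ : ∀ n, IsProbabilityMeasure (μ n)]
    (X : ∀ n, Fin n → Ω n → ℝ)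
    (hmeas : ∀ n (j : Fin n), Measurable (X n j))
    (hNA : ∀ n, NegativelyAssociated (μ n) (X n))
    (hlaw : ∀ n (j : Fin n), Measure.map (X n j) (μ n) = binomialMeasure (m n) (p n))
    (c : ℝ) (hc : 0 < c)
    (hmp : Tendsto (fun n : ℕ => (m n : ℝ) * p n / Real.log n) atTop (nhds c))
    (hplog : Tendsto (fun n : ℕ => p n * Real.log n) atTop (nhds 0))
    (Hstar : ℝ) (hHgt : 1 < Hstar)
    (hHeq : Hstar * Real.log Hstar - (Hstar - 1) = 1 / c)
    (hHuniq : ∀ H : ℝ, 1 < H → H * Real.log H - (H - 1) = 1 / c → H = Hstar) :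
    Tendsto (fun n : ℕ => (∫ ω, (⨆ j : Fin n, X n j ω) ∂(μ n)) / (c * Hstar * Real.log n))
      atTop (nhds 1) := by
  have hL : Tendsto (fun n : ℕ => log (n:ℝ)) atTop atTop :=
    Real.tendsto_log_atTop.comp tendsto_natCast_atTop_atTop
  have hLpos : ∀ᶠ n : ℕ in atTop, 0 < log (n:ℝ) := hL.eventually_gt_atTop 0
  have hH0 : 0 < Hstar := by linarith
  have hcH : 0 < c * Hstar := by positivity
  rw [tendsto_order]
  constructor
  · intro a ha
    have : max 1 (a * Hstar) < Hstar := max_lt hHgt (by nlinarith)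
    obtain ⟨H, hH1, hH2⟩ := exists_between this
    rw [max_lt_iff] at hH1
    have hlt := aux_h hH1.1 hH2
    rw [hHeq] at hlt
    obtain ⟨k, hk1, hk2, hk3⟩ := aux_asym m p hp c hc hmp hplog H hH1.1 hlt
    have hexp := (Real.tendsto_exp_neg_atTop_nhds_zero.comp hk3)
    have hlim := (hk1.mul ((tendsto_const_nhds (x := (1:ℝ))).sub hexp)).div_const (c * Hstar)
    have hgt : a < c * H * (1 - 0) / (c * Hstar) := by
      rw [lt_div_iff₀ hcH]
      nlinarith [mul_lt_mul_of_pos_left hH1.2 hc]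
    filter_upwards [hlim.eventually (lt_mem_nhds hgt), hLpos, hk2, eventually_gt_atTop 0]
      with n h1 hn hkm hn0
    refine h1.trans_le ?_
    have hl := aux_lower hn0 (hp n) (hmeas n) (hlaw n) (hNA n) (k n) hkm
    have hl2 := div_le_div_of_nonneg_right hl (by positivity : 0 ≤ c * Hstar * log n)
    refine le_trans (le_of_eq ?_) hl2
    simp only [Function.comp]
    field_simp
  · intro a ha
    have ht : 0 < log Hstar := Real.log_pos hHgt
    have hlim := ((tendsto_const_nhds (x := (1:ℝ))).add (hmp.mul_const (Hstar - 1))).div_const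
      (log Hstar * (c * Hstar))
    have he : (1 + c * (Hstar - 1)) / (log Hstar * (c * Hstar)) = 1 := by
      rw [div_eq_one_iff_eq (by positivity)]
      field_simp at hHeq
      linarith
    rw [he] at hlim
    filter_upwards [hlim.eventually (gt_mem_nhds ha), hLpos, eventually_gt_atTop 0] with n h1 hn hn0
    refine lt_of_le_of_lt ?_ h1
    have hu := aux_upper hn0 (hp n) (hmeas n) (hlaw n) (log Hstar)
    rw [Real.exp_log hH0] at hu
    rw [div_le_div_iff₀ (by positivity) (by positivity)]
    have e : (1 + (m n : ℝ) * p n / log n * (Hstar - 1)) * (c * Hstar * log n) =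
      (log n + m n * p n * (Hstar - 1)) * (c * Hstar) := by field_simp
    rw [e]
    nlinarith [mul_le_mul_of_nonneg_right hu hcH.le]

end
end

section
/- For each n, let (X_j^{(n)})_{1≤j≤n} be negatively associated random variables, each with the binomial distribution B(m(n), p(n)), where the parameters satisfy m(n)·p(n)/log n → c for some constant c > 1 and p(n)·log n → 0 as n → ∞. Let H̃* = H̃*(c) be the unique H ∈ (0,1) with H log H − (H−1) = 1/c. Then E[min_{1≤j≤n} X_j^{(n)}] = c·H̃*·log n·(1+o(1)); that is, E[min_{1≤j≤n} X_j^{(n)}]/(c·H̃*·log n) → 1 as n → ∞. -/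
open MeasureTheory Filter Real

noncomputable section

def bw (m : ℕ) (p : ℝ) (k : ℕ) : ℝ := (m.choose k : ℝ) * p ^ k * (1 - p) ^ (m - k)

lemma bw_nonneg {p : ℝ} (hp : p ∈ Set.Ioo (0:ℝ) 1) (m k : ℕ) : 0 ≤ bw m p k := by
  have h1 := hp.1.le
  have h2 : 0 ≤ 1 - p := by linarith [hp.2]
  unfold bw; positivity

lemma bw_sum (m : ℕ) (p : ℝ) : ∑ k ∈ Finset.range (m+1), bw m p k = 1 := by
  have h := add_pow p (1-p) m
  rw [show p + (1 - p) = 1 by ring, one_pow] at h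
  rw [h]
  refine Finset.sum_congr rfl fun k _ => ?_
  unfold bw; ring

lemma bw_pow_sum (m : ℕ) (p H : ℝ) :
    ∑ k ∈ Finset.range (m+1), bw m p k * H ^ k = (p * H + (1 - p)) ^ m := by
  rw [add_pow]
  refine Finset.sum_congr rfl fun k _ => ?_
  unfold bw; rw [mul_pow]; ring

lemma bw_mean (m : ℕ) (p : ℝ) :
    ∑ k ∈ Finset.range (m+1), bw m p k * k = m * p := by
  have h := congrArg (Polynomial.eval p) (bernsteinPolynomial.sum_smul ℝ m)
  simp only [Polynomial.eval_finsetSum, bernsteinPolynomial] at h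
  simp at h
  rw [← h]
  refine Finset.sum_congr rfl fun k _ => ?_
  unfold bw; ring

section
variable {Ω : Type*} [MeasurableSpace Ω] {μ : Measure Ω}

lemma map_integral {m : ℕ} {p : ℝ} (hp : p ∈ Set.Ioo (0:ℝ) 1)
    {X : Ω → ℝ} (hX : Measurable X) (hl : Measure.map X μ = binomialMeasure m p)
    {g : ℝ → ℝ} (hg : Measurable g) :
    ∫ ω, g (X ω) ∂μ = ∑ k ∈ Finset.range (m+1), bw m p k * g k := by
  rw [← integral_map hX.aemeasurable hg.aestronglyMeasurable, hl, binomialMeasure,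
    integral_finsetSum_measure]
  · refine Finset.sum_congr rfl fun k _ => ?_
    rw [integral_smul_measure, integral_dirac, ENNReal.toReal_ofReal (by exact bw_nonneg hp m k)]
    rfl
  · intro k _
    refine Integrable.smul_measure ?_ ENNReal.ofReal_ne_top
    exact integrable_dirac (by simp)

lemma law_ae {m : ℕ} {p : ℝ}
    {X : Ω → ℝ} (hX : Measurable X) (hl : Measure.map X μ = binomialMeasure m p) :
    ∀ᵐ ω ∂μ, 0 ≤ X ω ∧ X ω ≤ m := by
  have hs : MeasurableSet {x : ℝ | 0 ≤ x ∧ x ≤ m} := measurableSet_Icc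
  have : ∀ᵐ x ∂(Measure.map X μ), 0 ≤ x ∧ x ≤ (m : ℝ) := by
    rw [hl, ae_iff, binomialMeasure]
    have hs' : MeasurableSet {x : ℝ | ¬ (0 ≤ x ∧ x ≤ m)} := hs.compl
    rw [Measure.finsetSum_apply]
    refine Finset.sum_eq_zero fun k hk => ?_
    rw [Measure.smul_apply, Measure.dirac_apply' _ hs']
    have : (k:ℝ) ≤ m := by
      have := Finset.mem_range.1 hk
      exact_mod_cast Nat.lt_succ_iff.1 this
    have hkm : k ≤ m := by exact_mod_cast this
    simp [hkm]
  exact (ae_map_iff hX.aemeasurable hs).1 this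

lemma NA_prod [IsProbabilityMeasure μ] {ι : Type*} [DecidableEq ι] {X : ι → Ω → ℝ}
    (h : NegativelyAssociated μ X) {f : ℝ → ℝ} (hf : Measurable f) (hm : Monotone f)
    (h0 : ∀ x, 0 ≤ f x) (h1 : ∀ x, f x ≤ 1) {r : ℝ} (hr : ∀ j, ∫ ω, f (X j ω) ∂μ ≤ r)
    (S : Finset ι) : ∫ ω, ∏ j ∈ S, f (X j ω) ∂μ ≤ r ^ S.card := by
  induction S using Finset.induction_on with
  | empty => simp
  | insert a S ha ih =>
    have key := h {a} S (by simpa using ha) (fun x => f (x ⟨a, by simp⟩))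
      (fun x => ∏ j, f (x j)) (by fun_prop)
      (by fun_prop)
      (fun x y hxy => hm (hxy _))
      (fun x y hxy => Finset.prod_le_prod (fun i _ => h0 _) (fun i _ => hm (hxy _)))
      ⟨1, fun x => abs_le.2 ⟨by linarith [h0 (x ⟨a, by simp⟩)], h1 _⟩⟩
      ⟨1, fun x => abs_le.2 ⟨by linarith [Finset.prod_nonneg (s := Finset.univ) (fun i _ => h0 (x i))],
        Finset.prod_le_one (fun i _ => h0 _) (fun i _ => h1 _)⟩⟩
    simp only [Finset.prod_insert ha, Finset.card_insert_of_notMem ha]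
    have e : ∀ ω, ∏ j : S, f (X j.1 ω) = ∏ j ∈ S, f (X j ω) := fun ω =>
      Finset.prod_coe_sort S (fun j => f (X j ω))
    simp only [e] at key
    refine key.trans ?_
    rw [pow_succ']
    have hr0 : 0 ≤ r := (integral_nonneg (fun ω => h0 _)).trans (hr a)
    exact mul_le_mul (hr a) ih (integral_nonneg fun ω => Finset.prod_nonneg fun i _ => h0 _) hr0

lemma lower_fin [IsProbabilityMeasure μ] {n m : ℕ} {p : ℝ} (hn : 0 < n)
    (hp : p ∈ Set.Ioo (0:ℝ) 1) {X : Fin n → Ω → ℝ} (hX : ∀ j, Measurable (X j))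
    (hl : ∀ j, Measure.map (X j) μ = binomialMeasure m p) {H : ℝ} (hH0 : 0 < H) (hH1 : H < 1) :
    H * (m * p) * (1 - n * exp (-(m * p) * (H * log H - (H - 1)))) ≤ ∫ ω, ⨅ j, X j ω ∂μ := by
  have : Nonempty (Fin n) := ⟨⟨0, hn⟩⟩
  have hae : ∀ᵐ ω ∂μ, ∀ j, 0 ≤ X j ω ∧ X j ω ≤ m := ae_all_iff.2 fun j => law_ae (hX j) (hl j)
  set t := H * (m * p) with ht
  have ht0 : 0 ≤ t := by have := hp.1.le; positivity
  have hbd : ∀ j, Integrable (fun ω => exp (log H * (X j ω - t))) μ := by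
    intro j
    refine Integrable.of_bound (C := exp (- log H * t)) (by
      have := hX j
      exact (by fun_prop : Measurable (fun ω => exp (log H * (X j ω - t)))).aestronglyMeasurable) ?_
    filter_upwards [hae] with ω hω
    rw [norm_of_nonneg (exp_pos _).le]
    apply exp_le_exp.2
    nlinarith [(hω j).1, log_neg hH0 hH1]
  have hint : Integrable (fun ω => t * (1 - ∑ j, exp (log H * (X j ω - t)))) μ :=
    ((integrable_const _).sub (integrable_finsetSum _ fun j _ => hbd j)).const_mul _
  have hinf : Integrable (fun ω => ⨅ j, X j ω) μ := by
    refine Integrable.of_bound (C := m) (Measurable.iInf hX).aestronglyMeasurable ?_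
    filter_upwards [hae] with ω hω
    obtain ⟨j, hj⟩ := exists_eq_ciInf_of_finite (f := fun j => X j ω)
    rw [← hj, norm_of_nonneg (hω j).1]
    exact (hω j).2
  have hcalc : ∀ j, ∫ ω, exp (log H * (X j ω - t)) ∂μ ≤ exp (-(m * p) * (H * log H - (H - 1))) := by
    intro j
    rw [map_integral hp (hX j) (hl j) (g := fun x => exp (log H * (x - t))) (by fun_prop)]
    have : ∀ k : ℕ, exp (log H * (k - t)) = H ^ k * exp (- (log H * t)) := by
      intro k
      rw [show log H * (k - t) = k * log H + (- (log H * t)) by ring, exp_add, exp_nat_mul, exp_log hH0]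
    simp only [this, ← mul_assoc]
    rw [← Finset.sum_mul, bw_pow_sum]
    have h1 : (p * H + (1 - p)) ^ m ≤ exp (m * (-(p * (1 - H)))) := by
      rw [exp_nat_mul]
      have := hp.1; have := hp.2
      refine pow_le_pow_left₀ (by nlinarith) ?_ m
      linarith [add_one_le_exp (-(p * (1 - H)))]
    refine (mul_le_mul_of_nonneg_right h1 (exp_pos _).le).trans ?_
    rw [← exp_add]
    apply exp_le_exp.2
    rw [ht]; apply le_of_eq; ring
  calc t * (1 - n * exp (-(m * p) * (H * log H - (H - 1)))) ≤
      t * (1 - ∑ j : Fin n, ∫ ω, exp (log H * (X j ω - t)) ∂μ) := by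
        apply mul_le_mul_of_nonneg_left _ ht0
        have := Finset.sum_le_sum (s := Finset.univ) (fun j (_ : j ∈ Finset.univ) => hcalc j)
        simp only [Finset.sum_const, Finset.card_univ, Fintype.card_fin, nsmul_eq_mul] at this
        linarith
    _ = ∫ ω, t * (1 - ∑ j, exp (log H * (X j ω - t))) ∂μ := by
        rw [integral_const_mul, integral_sub (integrable_const _)
          (integrable_finsetSum _ fun j _ => hbd j), integral_finsetSum _ fun j _ => hbd j]
        simp
    _ ≤ _ := by
        refine integral_mono_ae hint hinf ?_
        filter_upwards [hae] with ω hω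
        obtain ⟨j, hj⟩ := exists_eq_ciInf_of_finite (f := fun j => X j ω)
        show _ ≤ ⨅ j, X j ω
        rw [← hj]
        have hs : exp (log H * (X j ω - t)) ≤ ∑ j, exp (log H * (X j ω - t)) :=
          Finset.single_le_sum (f := fun j => exp (log H * (X j ω - t)))
            (fun i _ => (exp_pos _).le) (Finset.mem_univ j)
        have hs0 := (exp_pos (log H * (X j ω - t)))
        rcases le_total t (X j ω) with h | h
        · nlinarith
        · have : 1 ≤ exp (log H * (X j ω - t)) := by
            apply one_le_exp
            nlinarith [log_neg hH0 hH1]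
          nlinarith [(hω j).1]

lemma upper_fin [IsProbabilityMeasure μ] {n m : ℕ} {p : ℝ} (hn : 0 < n)
    (hp : p ∈ Set.Ioo (0:ℝ) 1) {X : Fin n → Ω → ℝ} (hX : ∀ j, Measurable (X j))
    (hNA : NegativelyAssociated μ X)
    (hl : ∀ j, Measure.map (X j) μ = binomialMeasure m p) {t : ℝ} {k : ℕ} (hkm : k ≤ m)
    (hk : (k:ℝ) ≤ t) :
    ∫ ω, ⨅ j, X j ω ∂μ ≤ t + m * p * (1 - bw m p k) ^ (n - 1) := by
  have : Nonempty (Fin n) := ⟨⟨0, hn⟩⟩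
  have hae : ∀ᵐ ω ∂μ, ∀ j, 0 ≤ X j ω ∧ X j ω ≤ m := ae_all_iff.2 fun j => law_ae (hX j) (hl j)
  have ht0 : 0 ≤ t := (Nat.cast_nonneg k).trans hk
  have hinf : Integrable (fun ω => ⨅ j, X j ω) μ := by
    refine Integrable.of_bound (C := m) (Measurable.iInf hX).aestronglyMeasurable ?_
    filter_upwards [hae] with ω hω
    obtain ⟨j, hj⟩ := exists_eq_ciInf_of_finite (f := fun j => X j ω)
    rw [← hj, norm_of_nonneg (hω j).1]
    exact (hω j).2
  let f : ℝ → ℝ := fun x => if t < x then 1 else 0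
  have hf : Measurable f := Measurable.ite measurableSet_Ioi measurable_const measurable_const
  have hfm : Monotone f := by
    intro x y hxy
    simp only [f]
    split_ifs with h1 h2 <;> first | exact le_rfl | exact zero_le_one | exact absurd (h1.trans_le hxy) h2
  have h0 : ∀ x, 0 ≤ f x := fun x => by simp only [f]; split_ifs <;> norm_num
  have h1 : ∀ x, f x ≤ 1 := fun x => by simp only [f]; split_ifs <;> norm_num
  let g : ℝ → ℝ := fun x => max 0 (min x m)
  have hg : Measurable g := by fun_prop
  have hg0 : ∀ x, 0 ≤ g x := fun x => le_max_left _ _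
  have hg1 : ∀ x, g x ≤ m := fun x => max_le (Nat.cast_nonneg m) (min_le_right _ _)
  have hgm : Monotone g := fun x y hxy => max_le_max le_rfl (min_le_min hxy le_rfl)
  have hr : ∀ j, ∫ ω, f (X j ω) ∂μ ≤ 1 - bw m p k := by
    intro j
    rw [map_integral hp (hX j) (hl j) hf, ← bw_sum m p]
    have hkr : k ∈ Finset.range (m+1) := Finset.mem_range.2 (by omega)
    rw [← Finset.add_sum_erase _ _ hkr, ← Finset.add_sum_erase _ (fun i => bw m p i) hkr]
    have : f k = 0 := by simp [f, hk]
    rw [this]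
    have : ∑ x ∈ (Finset.range (m + 1)).erase k, bw m p x * f x ≤
        ∑ x ∈ (Finset.range (m + 1)).erase k, bw m p x :=
      Finset.sum_le_sum fun i _ => mul_le_of_le_one_right (bw_nonneg hp _ _) (h1 _)
    linarith
  let a : Fin n := ⟨0, hn⟩
  let S : Finset (Fin n) := Finset.univ.erase a
  have hS : S.card = n - 1 := by simp [S]
  have hP := NA_prod hNA hf hfm h0 h1 hr S
  rw [hS] at hP
  have key := hNA {a} S (by simp [S]) (fun x => g (x ⟨a, by simp⟩))
      (fun x => ∏ j, f (x j)) (by fun_prop)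
      (by fun_prop)
      (fun x y hxy => hgm (hxy _))
      (fun x y hxy => Finset.prod_le_prod (fun i _ => h0 _) (fun i _ => hfm (hxy _)))
      ⟨m, fun x => abs_le.2 ⟨by linarith [hg0 (x ⟨a, by simp⟩), (Nat.cast_nonneg m : (0:ℝ) ≤ m)], hg1 _⟩⟩
      ⟨1, fun x => abs_le.2 ⟨by linarith [Finset.prod_nonneg (s := Finset.univ) (fun i _ => h0 (x i))],
        Finset.prod_le_one (fun i _ => h0 _) (fun i _ => h1 _)⟩⟩
  have e : ∀ ω, ∏ j : S, f (X j.1 ω) = ∏ j ∈ S, f (X j ω) := fun ω =>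
      Finset.prod_coe_sort S (fun j => f (X j ω))
  simp only [e] at key
  have hmean : ∫ ω, g (X a ω) ∂μ = m * p := by
    rw [map_integral hp (hX a) (hl a) hg, ← bw_mean]
    refine Finset.sum_congr rfl fun k hk => ?_
    have : (k:ℝ) ≤ m := by
      have := Finset.mem_range.1 hk
      exact_mod_cast Nat.lt_succ_iff.1 this
    simp [g, this]
  rw [hmean] at key
  have hmp : 0 ≤ m * p := mul_nonneg (Nat.cast_nonneg m) hp.1.le
  have hprod0 : ∀ ω, 0 ≤ ∏ j ∈ S, f (X j ω) := fun ω => Finset.prod_nonneg fun i _ => h0 _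
  have hprod1 : ∀ ω, ∏ j ∈ S, f (X j ω) ≤ 1 := fun ω => Finset.prod_le_one (fun i _ => h0 _) fun i _ => h1 _
  have hint : Integrable (fun ω => g (X a ω) * ∏ j ∈ S, f (X j ω)) μ := by
    refine Integrable.of_bound (C := m) (by
      refine Measurable.aestronglyMeasurable ?_
      refine (hg.comp (hX a)).mul (Finset.measurable_prod _ fun j _ => hf.comp (hX j))) ?_
    filter_upwards with ω
    rw [norm_of_nonneg (mul_nonneg (hg0 _) (hprod0 _))]
    exact (mul_le_of_le_one_right (hg0 _) (hprod1 _)).trans (hg1 _)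
  calc ∫ ω, ⨅ j, X j ω ∂μ ≤ ∫ ω, (t + g (X a ω) * ∏ j ∈ S, f (X j ω)) ∂μ := by
        refine integral_mono_ae hinf ((integrable_const _).add hint) ?_
        filter_upwards [hae] with ω hω
        show ⨅ j, X j ω ≤ _
        have hb : ∀ i, ⨅ j, X j ω ≤ X i ω := fun i => ciInf_le (Set.finite_range _).bddBelow i
        by_cases hall : ∀ j ∈ S, t < X j ω
        · have : ∏ j ∈ S, f (X j ω) = 1 := Finset.prod_eq_one fun j hj => if_pos (hall j hj)
          rw [this, mul_one]
          have : g (X a ω) = X a ω := by simp [g, (hω a).1, (hω a).2]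
          rw [this]
          linarith [hb a]
        · push Not at hall
          obtain ⟨j, _, hj⟩ := hall
          have := mul_nonneg (hg0 (X a ω)) (hprod0 ω)
          linarith [hb j]
    _ = t + ∫ ω, g (X a ω) * ∏ j ∈ S, f (X j ω) ∂μ := by
        rw [integral_add (integrable_const _) hint]; simp
    _ ≤ _ := by
        have := mul_le_mul_of_nonneg_left hP hmp
        linarith
end
lemma log_factorial_le (k : ℕ) (hk : 1 ≤ k) :
    log (k.factorial : ℝ) ≤ 1 + log k + k * log k - k := by
  induction k, hk using Nat.le_induction with
  | base => simp
  | succ k hk ih =>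
    have hk0 : (0:ℝ) < k := by exact_mod_cast hk
    rw [Nat.factorial_succ]
    push_cast
    rw [log_mul (by positivity) (by positivity)]
    have h := one_sub_inv_le_log_of_pos (x := ((k:ℝ) + 1) / k) (by positivity)
    rw [log_div (by positivity) (by positivity)] at h
    have h2 : 1 ≤ ((k:ℝ)+1) * (log (k+1) - log k) := by
      have h3 := mul_le_mul_of_nonneg_left h (by positivity : 0 ≤ (k:ℝ)+1)
      have : ((k:ℝ)+1) * (1 - (((k:ℝ) + 1) / k)⁻¹) = 1 := by field_simp; ring
      linarith
    linarith

lemma log_bw_ge {m k : ℕ} {p : ℝ} (hp : p ∈ Set.Ioo (0:ℝ) 1) (hk : 1 ≤ k) (hkm : k < m) :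
    0 < bw m p k ∧
    k * (log (m * p / k) + 1 + log (1 - k / m)) - 1 - log k - m * p / (1 - p) ≤ log (bw m p k) := by
  have hp0 := hp.1
  have hp1 : 0 < 1 - p := by linarith [hp.2]
  have hk0 : (0:ℝ) < k := by exact_mod_cast hk
  have hm0 : (0:ℝ) < m := by exact_mod_cast (by omega : 0 < m)
  have hmk : (0:ℝ) < m - k := by
    have : (k:ℝ) < m := by exact_mod_cast hkm
    linarith
  have hge : ((m:ℝ) - k) ^ k / k.factorial * p ^ k * (1 - p) ^ m ≤ bw m p k := by
    unfold bw
    have h1 : ((m:ℝ) - k) ^ k / k.factorial ≤ m.choose k := by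
      refine le_trans ?_ (Nat.pow_le_choose (α := ℝ) k m)
      gcongr
      rw [Nat.cast_sub (by omega)]
      push_cast; linarith
    have h2 : (1 - p) ^ m ≤ (1 - p) ^ (m - k) := pow_le_pow_of_le_one hp1.le (by linarith) (by omega)
    gcongr
  have hpos : 0 < ((m:ℝ) - k) ^ k / k.factorial * p ^ k * (1 - p) ^ m := by positivity
  refine ⟨hpos.trans_le hge, ?_⟩
  refine le_trans ?_ (log_le_log hpos hge)
  rw [log_mul (by positivity) (by positivity), log_mul (by positivity) (by positivity),
    log_div (x := (m - k : ℝ) ^ k) (by positivity) (by positivity), log_pow, log_pow, log_pow,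
    log_div (by positivity) (by positivity), log_mul (by positivity) (by positivity)]
  have e : log (1 - k / m) = log ((m:ℝ) - k) - log m := by
    rw [← log_div (by positivity) (by positivity)]; congr 1; field_simp
  rw [e]
  have h1 := log_factorial_le k hk
  have h2 : - (m * p / (1 - p)) ≤ m * log (1 - p) := by
    have h := one_sub_inv_le_log_of_pos hp1
    have h3 := mul_le_mul_of_nonneg_left h hm0.le
    have : (m:ℝ) * (1 - (1 - p)⁻¹) = - (m * p / (1 - p)) := by field_simp; ring
    linarith
  linarith

lemma I_anti {a b : ℝ} (ha : 0 < a) (hab : a < b) (hb : b < 1) :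
    b * log b - (b - 1) < a * log a - (a - 1) := by
  have hb0 := ha.trans hab
  have h := log_le_sub_one_of_pos (x := b / a) (by positivity)
  rw [log_div hb0.ne' ha.ne'] at h
  have h2 := mul_le_mul_of_nonneg_left h ha.le
  have : a * (b / a - 1) = b - a := by field_simp
  nlinarith [log_neg hb0 hb]

section
variable {m : ℕ → ℕ} {p : ℕ → ℝ} {c : ℝ}

lemma logn : Tendsto (fun n : ℕ => log (n:ℝ)) atTop atTop :=
  tendsto_log_atTop.comp tendsto_natCast_atTop_atTop

lemma lim_p (hplog : Tendsto (fun n : ℕ => p n * Real.log n) atTop (nhds 0)) :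
    Tendsto p atTop (nhds 0) := by
  have := hplog.mul (tendsto_inv_atTop_zero.comp logn)
  rw [mul_zero] at this
  refine this.congr' ?_
  filter_upwards [logn.eventually_gt_atTop 0] with n hn
  simp only [Function.comp]
  field_simp

lemma lim_mp (hc : 1 < c)
    (hmp : Tendsto (fun n : ℕ => (m n : ℝ) * p n / Real.log n) atTop (nhds c)) :
    Tendsto (fun n => (m n : ℝ) * p n) atTop atTop := by
  have := hmp.pos_mul_atTop (by linarith) logn
  refine this.congr' ?_
  filter_upwards [logn.eventually_gt_atTop 0] with n hn
  field_simp

lemma lim_low (hc : 1 < c)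
    (hmp : Tendsto (fun n : ℕ => (m n : ℝ) * p n / Real.log n) atTop (nhds c))
    {J : ℝ} (hJ : 1 < c * J) :
    Tendsto (fun n : ℕ => (n:ℝ) * exp (-(m n * p n) * J)) atTop (nhds 0) := by
  have h1 : Tendsto (fun n : ℕ => 1 - (m n : ℝ) * p n / Real.log n * J) atTop (nhds (1 - c * J)) :=
    (hmp.mul_const J).const_sub 1
  have h2 := tendsto_exp_atBot.comp (h1.neg_mul_atTop (by linarith) logn)
  refine h2.congr' ?_
  filter_upwards [logn.eventually_gt_atTop 0, eventually_gt_atTop 0] with n hn hn0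
  have : (0:ℝ) < n := by exact_mod_cast hn0
  simp only [Function.comp]
  conv_rhs => rw [← exp_log this]
  rw [← exp_add]
  congr 1
  field_simp
  ring

lemma lim_high (hp : ∀ n, p n ∈ Set.Ioo (0 : ℝ) 1) (hc : 1 < c)
    (hmp : Tendsto (fun n : ℕ => (m n : ℝ) * p n / Real.log n) atTop (nhds c))
    (hplog : Tendsto (fun n : ℕ => p n * Real.log n) atTop (nhds 0))
    {H : ℝ} (hH0 : 0 < H) (hH1 : H < 1) (hJ : c * (H * log H - (H - 1)) < 1) :
    Tendsto (fun n : ℕ => (1 - bw (m n) (p n) ⌊H * (m n * p n)⌋₊) ^ (n - 1)) atTop (nhds 0) := by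
  set k : ℕ → ℕ := fun n => ⌊H * (m n * p n)⌋₊ with hk
  have hp0 := lim_p hplog
  have hM := lim_mp hc hmp
  have hkM : Tendsto (fun n => (k n : ℝ) / (m n * p n)) atTop (nhds H) :=
    (tendsto_nat_floor_mul_div_atTop hH0.le).comp hM
  have hkL : Tendsto (fun n : ℕ => (k n : ℝ) / log n) atTop (nhds (H * c)) := by
    refine (hkM.mul hmp).congr' ?_
    filter_upwards [hM.eventually_gt_atTop 0] with n hn
    exact div_mul_div_cancel₀ hn.ne'
  have hki : Tendsto k atTop atTop := tendsto_nat_floor_atTop.comp (hM.const_mul_atTop hH0)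
  have hkr : Tendsto (fun n => (k n : ℝ)) atTop atTop := tendsto_natCast_atTop_atTop.comp hki
  have h1 : Tendsto (fun n => log (m n * p n / k n)) atTop (nhds (- log H)) := by
    refine ((hkM.log hH0.ne').neg).congr fun n => ?_
    rw [← log_inv, inv_div]
  have h2 : Tendsto (fun n => log (1 - k n / m n)) atTop (nhds 0) := by
    have : Tendsto (fun n => (k n : ℝ) / m n) atTop (nhds 0) := by
      have := hkM.mul hp0
      rw [mul_zero] at this
      refine this.congr fun n => ?_
      have := (hp n).1.ne'
      field_simp
    have := (this.const_sub 1).log (by norm_num)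
    simpa using this
  have h3 : Tendsto (fun n : ℕ => log (k n) / log n) atTop (nhds 0) := by
    have h := (isLittleO_log_id_atTop.tendsto_div_nhds_zero.comp hkr).mul hkL
    rw [zero_mul] at h
    refine h.congr' ?_
    filter_upwards [hkr.eventually_gt_atTop 0] with n hn
    simp only [Function.comp, id]
    field_simp
  have h4 : Tendsto (fun n : ℕ => (log (n:ℝ))⁻¹) atTop (nhds 0) := tendsto_inv_atTop_zero.comp logn
  have h5 : Tendsto (fun n : ℕ => (m n * p n / log n) / (1 - p n)) atTop (nhds (c / (1 - 0))) :=
    hmp.div (hp0.const_sub 1) (by norm_num)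
  have h6 := (((hkL.mul ((h1.add_const 1).add h2)).sub h4).sub h3).sub h5
  have h7 := (h6.const_add 1).pos_mul_atTop (by simp only [sub_zero, div_one, add_zero]; nlinarith) logn
  have h8 := ((tendsto_exp_atTop.comp h7).const_mul_atTop (by norm_num : (0:ℝ) < 1/2))
  have h9 := tendsto_exp_atBot.comp (tendsto_neg_atTop_atBot.comp h8)
  refine squeeze_zero' ?_ ?_ h9
  · refine Eventually.of_forall fun n => pow_nonneg ?_ _
    have hkm : k n ∈ Finset.range (m n + 1) := by
      have : k n ≤ m n := by
        apply Nat.floor_le_of_le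
        have := (hp n).1; have := (hp n).2
        have : (0:ℝ) ≤ m n := Nat.cast_nonneg _
        calc H * (m n * p n) ≤ 1 * (m n * 1) := by gcongr
          _ = _ := by ring
      exact Finset.mem_range.2 (by omega)
    have := Finset.single_le_sum (fun i _ => bw_nonneg (hp n) (m n) i) hkm
    rw [bw_sum] at this
    linarith
  · filter_upwards [hM.eventually_gt_atTop 0, hki.eventually_ge_atTop 1, eventually_ge_atTop 2,
      logn.eventually_gt_atTop 0] with n hMn hkn hn hL
    have hn0 : (0:ℝ) < n := by exact_mod_cast (by omega : 0 < n)
    have hm0 : (0:ℝ) < m n := by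
      have := (hp n).1
      by_contra h
      have : (m n : ℝ) = 0 := le_antisymm (not_lt.1 h) (Nat.cast_nonneg _)
      rw [this] at hMn; simp at hMn
    have hkm : k n < m n := by
      rw [hk]
      apply (Nat.floor_lt (by positivity)).2
      have := (hp n).1; have := (hp n).2
      calc H * (m n * p n) < 1 * (m n * p n) := by gcongr
        _ ≤ 1 * (m n * 1) := by gcongr
        _ = _ := by ring
    obtain ⟨hb0, hb⟩ := log_bw_ge (hp n) hkn hkm
    have hb1 : bw (m n) (p n) (k n) ≤ 1 := by
      have := Finset.single_le_sum (fun i _ => bw_nonneg (hp n) (m n) i)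
        (Finset.mem_range.2 (by omega : k n < m n + 1))
      rwa [bw_sum] at this
    have hstep : (1 - bw (m n) (p n) (k n)) ^ (n - 1) ≤
        exp (-((n - 1 : ℕ) * bw (m n) (p n) (k n))) := by
      rw [← mul_neg, exp_nat_mul]
      refine pow_le_pow_left₀ (by linarith) ?_ _
      linarith [add_one_le_exp (-bw (m n) (p n) (k n))]
    refine hstep.trans (exp_le_exp.2 (neg_le_neg ?_))
    simp only [Function.comp]
    have hhalf : (1/2 : ℝ) * n ≤ (n - 1 : ℕ) := by
      rw [Nat.cast_sub (by omega)]
      have : (2:ℝ) ≤ n := by exact_mod_cast hn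
      push_cast; linarith
    refine le_trans ?_ (mul_le_mul_of_nonneg_right hhalf hb0.le)
    rw [mul_assoc]
    refine mul_le_mul_of_nonneg_left ?_ (by norm_num)
    rw [← exp_log hb0]
    refine le_trans ?_ (mul_le_mul_of_nonneg_right (exp_log hn0).le (exp_pos _).le)
    rw [← exp_add]
    apply exp_le_exp.2
    refine le_trans (le_of_eq ?_) (add_le_add_right hb (log (n:ℝ)))
    field_simp
end
/-- **Critical zone for negatively associated binomial minima.**  If for each `n` the
variables `X^{(n)}_1, …, X^{(n)}_n` are negatively associated, each `B(m(n), p(n))`,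
with `m(n) p(n) / log n → c > 1` and `p(n) log n → 0`, and `H̃* ∈ (0,1)` is the unique
solution of `H log H - (H-1) = 1/c`, then `E[min_j X^{(n)}_j] = c H̃* log n (1 + o(1))`. -/
theorem expected_min_NA_binomial_critical (m : ℕ → ℕ) (p : ℕ → ℝ)
    (hp : ∀ n, p n ∈ Set.Ioo (0 : ℝ) 1)
    (Ω : ℕ → Type*) [mΩ : ∀ n, MeasurableSpace (Ω n)] (μ : ∀ n, Measure (Ω n))
    [hμ : ∀ n, IsProbabilityMeasure (μ n)]
    (X : ∀ n, Fin n → Ω n → ℝ)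
    (hmeas : ∀ n (j : Fin n), Measurable (X n j))
    (hNA : ∀ n, NegativelyAssociated (μ n) (X n))
    (hlaw : ∀ n (j : Fin n), Measure.map (X n j) (μ n) = binomialMeasure (m n) (p n))
    (c : ℝ) (hc : 1 < c)
    (hmp : Tendsto (fun n : ℕ => (m n : ℝ) * p n / Real.log n) atTop (nhds c))
    (hplog : Tendsto (fun n : ℕ => p n * Real.log n) atTop (nhds 0))
    (Hstar : ℝ) (hH0 : 0 < Hstar) (hH1 : Hstar < 1)
    (hHeq : Hstar * Real.log Hstar - (Hstar - 1) = 1 / c)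
    (hHuniq : ∀ H : ℝ, 0 < H → H < 1 → H * Real.log H - (H - 1) = 1 / c → H = Hstar) :
    Tendsto (fun n : ℕ => (∫ ω, (⨅ j : Fin n, X n j ω) ∂(μ n)) / (c * Hstar * Real.log n))
      atTop (nhds 1) := by

  have hc0 : 0 < c := by linarith
  have hD : 0 < c * Hstar := by positivity
  rw [tendsto_order]
  constructor
  · intro a ha
    obtain ⟨H, h1, h2⟩ := exists_between (show max (a * Hstar) 0 < Hstar by
      apply max_lt _ hH0; nlinarith)
    have hHa : a * Hstar < H := (le_max_left _ _).trans_lt h1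
    have hHpos : 0 < H := (le_max_right _ _).trans_lt h1
    have hHlt : H < 1 := h2.trans hH1
    have hJ : 1 < c * (H * log H - (H - 1)) := by
      have := I_anti hHpos h2 hH1
      rw [hHeq, div_lt_iff₀ hc0] at this
      linarith
    have hlim : Tendsto (fun n : ℕ => H * (m n * p n / log n) / (c * Hstar) *
        (1 - n * exp (-(m n * p n) * (H * log H - (H - 1))))) atTop
        (nhds (H * c / (c * Hstar) * (1 - 0))) :=
      ((hmp.const_mul H).div_const _).mul ((lim_low hc hmp hJ).const_sub 1)
    have hlt : a < H * c / (c * Hstar) * (1 - 0) := by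
      rw [sub_zero, mul_one, lt_div_iff₀ hD]; nlinarith
    filter_upwards [hlim.eventually_const_lt hlt, eventually_gt_atTop 0,
      logn.eventually_gt_atTop 0] with n hn hn0 hL
    refine hn.trans_le ?_
    rw [le_div_iff₀ (by positivity)]
    refine le_trans (le_of_eq ?_) (lower_fin hn0 (hp n) (hmeas n) (hlaw n) hHpos hHlt)
    field_simp
  · intro a ha
    obtain ⟨H, h1, h2⟩ := exists_between (show Hstar < min (a * Hstar) 1 by
      apply lt_min _ hH1; nlinarith)
    have hHa : H < a * Hstar := h2.trans_le (min_le_left _ _)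
    have hHlt : H < 1 := h2.trans_le (min_le_right _ _)
    have hHpos : 0 < H := hH0.trans h1
    have hJ : c * (H * log H - (H - 1)) < 1 := by
      have := I_anti hH0 h1 hHlt
      rw [hHeq, lt_div_iff₀ hc0] at this
      linarith
    have hlim : Tendsto (fun n : ℕ => (m n * p n / log n) / (c * Hstar) *
        (H + (1 - bw (m n) (p n) ⌊H * (m n * p n)⌋₊) ^ (n - 1))) atTop
        (nhds (c / (c * Hstar) * (H + 0))) :=
      (hmp.div_const _).mul ((lim_high hp hc hmp hplog hHpos hHlt hJ).const_add H)
    have hlt : c / (c * Hstar) * (H + 0) < a := by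
      rw [add_zero, div_mul_eq_mul_div, div_lt_iff₀ hD]; nlinarith
    filter_upwards [hlim.eventually_lt_const hlt, eventually_gt_atTop 0,
      logn.eventually_gt_atTop 0] with n hn hn0 hL
    refine lt_of_le_of_lt ?_ hn
    rw [div_le_iff₀ (by positivity)]
    have hmp0 : 0 ≤ (m n : ℝ) * p n := mul_nonneg (Nat.cast_nonneg _) (hp n).1.le
    have hkm : ⌊H * (m n * p n)⌋₊ ≤ m n := by
      apply Nat.floor_le_of_le
      have := (hp n).1; have := (hp n).2
      calc H * (m n * p n) ≤ 1 * (m n * 1) := by gcongr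
        _ = _ := by ring
    refine (upper_fin hn0 (hp n) (hmeas n) (hNA n) (hlaw n) hkm
      (Nat.floor_le (by positivity))).trans (le_of_eq ?_)
    field_simp

end
end

section
/- Let n, m, k be positive integers, p ∈ (0,1), and let X_1,…,X_n be random variables defined on a common probability space, each with the binomial distribution B(m,p) (no independence assumed). Then E[max_{1≤j≤n} X_j] ≤ k + n·(mp)^{k+1}·e^{mp}. -/
open MeasureTheory Filter Real

noncomputable section

theorem binom_term_aux (m k l : ℕ) (p : ℝ) (hp : p ∈ Set.Ioo (0 : ℝ) 1) :
    ((m.choose (k + 1 + l) : ℝ) * p ^ (k + 1 + l) * (1 - p) ^ (m - (k + 1 + l))) * ((l : ℝ) + 1)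
      ≤ ((m : ℝ) * p) ^ (k + 1) * (((m : ℝ) * p) ^ l / (l.factorial : ℝ)) := by
  obtain ⟨h0, h1⟩ := hp
  have hc : (m.choose (k + 1 + l) : ℝ) ≤ (m : ℝ) ^ (k + 1 + l) / ((k + 1 + l).factorial : ℝ) :=
    Nat.choose_le_pow_div _ _
  have hq : (1 - p) ^ (m - (k + 1 + l)) ≤ 1 := pow_le_one₀ (by linarith) (by linarith)
  have hq0 : 0 ≤ (1 - p) ^ (m - (k + 1 + l)) := pow_nonneg (by linarith) _
  have hf : ((l : ℝ) + 1) * (l.factorial : ℝ) ≤ ((k + 1 + l).factorial : ℝ) := by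
    have h := Nat.factorial_le (show l + 1 ≤ k + 1 + l by omega)
    rw [Nat.factorial_succ] at h
    exact_mod_cast h
  have hl : (0 : ℝ) < (l.factorial : ℝ) := by exact_mod_cast Nat.factorial_pos l
  have hkl : (0 : ℝ) < ((k + 1 + l).factorial : ℝ) := by exact_mod_cast Nat.factorial_pos _
  calc ((m.choose (k + 1 + l) : ℝ) * p ^ (k + 1 + l) * (1 - p) ^ (m - (k + 1 + l))) * ((l : ℝ) + 1)
      ≤ (((m : ℝ) ^ (k + 1 + l) / ((k + 1 + l).factorial : ℝ)) * p ^ (k + 1 + l) * 1)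
          * ((l : ℝ) + 1) := by gcongr
    _ = ((m : ℝ) * p) ^ (k + 1 + l) * (((l : ℝ) + 1) / ((k + 1 + l).factorial : ℝ)) := by
        rw [mul_pow]; ring
    _ ≤ ((m : ℝ) * p) ^ (k + 1 + l) * (1 / (l.factorial : ℝ)) := by
        have : ((l : ℝ) + 1) / ((k + 1 + l).factorial : ℝ) ≤ 1 / (l.factorial : ℝ) := by
          rw [div_le_div_iff₀ hkl hl]; linarith
        have h2 : 0 ≤ ((m : ℝ) * p) ^ (k + 1 + l) := by positivity
        exact mul_le_mul_of_nonneg_left this h2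
    _ = _ := by rw [pow_add]; ring

theorem binom_sum_aux (m k : ℕ) (p : ℝ) (hp : p ∈ Set.Ioo (0 : ℝ) 1) :
    ∑ i ∈ Finset.range (m + 1),
      ((m.choose i : ℝ) * p ^ i * (1 - p) ^ (m - i)) * max ((i : ℝ) - k) 0
      ≤ ((m : ℝ) * p) ^ (k + 1) * Real.exp ((m : ℝ) * p) := by
  have h0 := hp.1
  have h1 : 0 ≤ 1 - p := by linarith [hp.2]
  calc _ ≤ ∑ i ∈ Finset.range (k + 1 + m),
      ((m.choose i : ℝ) * p ^ i * (1 - p) ^ (m - i)) * max ((i : ℝ) - k) 0 := by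
        apply Finset.sum_le_sum_of_subset_of_nonneg
        · intro i; simp only [Finset.mem_range]; omega
        · intro i _ _; positivity
    _ ≤ ∑ l ∈ Finset.range m,
        ((m : ℝ) * p) ^ (k + 1) * (((m : ℝ) * p) ^ l / (l.factorial : ℝ)) := by
        rw [Finset.sum_range_add, Finset.sum_eq_zero, zero_add]
        · apply Finset.sum_le_sum
          intro l _
          refine le_trans (le_of_eq ?_) (binom_term_aux m k l p hp)
          congr 1
          rw [max_eq_left]
          · push_cast; ring
          · push_cast; linarith [(Nat.cast_nonneg l : (0 : ℝ) ≤ l)]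
        · intro i hi
          have : i ≤ k := by have := Finset.mem_range.1 hi; omega
          have : (i : ℝ) ≤ k := by exact_mod_cast this
          rw [max_eq_right (by linarith), mul_zero]
    _ ≤ _ := by
        rw [← Finset.mul_sum]
        exact mul_le_mul_of_nonneg_left (Real.sum_le_exp_of_nonneg (by positivity) m)
          (by positivity)

theorem binom_integrable_aux (m : ℕ) (p : ℝ) (g : ℝ → ℝ) (hg : Measurable g) :
    Integrable g (binomialMeasure m p) := by
  unfold binomialMeasure
  rw [integrable_finsetSum_measure]
  intro i _
  exact (integrable_dirac (by simp)).smul_measure ENNReal.ofReal_ne_top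

theorem binom_integral_aux (m k : ℕ) (p : ℝ) (hp : p ∈ Set.Ioo (0 : ℝ) 1) :
    ∫ x, max (x - k) 0 ∂(binomialMeasure m p)
      ≤ ((m : ℝ) * p) ^ (k + 1) * Real.exp ((m : ℝ) * p) := by
  have h0 := hp.1
  have h1 : 0 ≤ 1 - p := by linarith [hp.2]
  refine le_trans (le_of_eq ?_) (binom_sum_aux m k p hp)
  unfold binomialMeasure
  rw [integral_finsetSum_measure]
  · apply Finset.sum_congr rfl
    intro i _
    rw [integral_smul_measure, integral_dirac, ENNReal.toReal_ofReal (by positivity), smul_eq_mul]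
  · intro i _
    exact (integrable_dirac (by simp)).smul_measure ENNReal.ofReal_ne_top

/-- **Truncation bound for the expected maximum of binomial variables.**
If `X_1, …, X_n` each have law `B(m, p)` (no independence assumed) and `k` is a positive
integer, then `E[max_j X_j] ≤ k + n (mp)^{k+1} e^{mp}`. -/
theorem expected_max_binomial_truncation_bound (n m k : ℕ) (hn : 0 < n) (hm : 0 < m)
    (hk : 0 < k) (p : ℝ) (hp : p ∈ Set.Ioo (0 : ℝ) 1)
    {Ω : Type*} [MeasurableSpace Ω] (μ : Measure Ω) [IsProbabilityMeasure μ]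
    (X : Fin n → Ω → ℝ) (hmeas : ∀ j, Measurable (X j))
    (hlaw : ∀ j, Measure.map (X j) μ = binomialMeasure m p) :
    (∫ ω, (⨆ j : Fin n, X j ω) ∂μ) ≤
      (k : ℝ) + (n : ℝ) * ((m : ℝ) * p) ^ (k + 1) * Real.exp ((m : ℝ) * p) := by
  have h0 := hp.1
  have hm' : Measurable (fun x : ℝ => max (x - k) 0) := by fun_prop
  by_cases hi : Integrable (fun ω => ⨆ j : Fin n, X j ω) μ
  swap
  · rw [integral_undef hi]; positivity
  have hI : ∀ j, Integrable (fun ω => max (X j ω - k) 0) μ := by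
    intro j
    have h := binom_integrable_aux m p _ hm'
    rw [← hlaw j] at h
    exact h.comp_measurable (hmeas j)
  have hb : ∀ j, ∫ ω, max (X j ω - k) 0 ∂μ
      ≤ ((m : ℝ) * p) ^ (k + 1) * Real.exp ((m : ℝ) * p) := by
    intro j
    have h := binom_integral_aux m k p hp
    rw [← hlaw j, integral_map (hmeas j).aemeasurable hm'.aestronglyMeasurable] at h
    exact h
  have hS : Integrable (fun ω => ∑ j, max (X j ω - k) 0) μ := integrable_finsetSum _ fun j _ => hI j
  have : Nonempty (Fin n) := ⟨⟨0, hn⟩⟩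
  calc (∫ ω, (⨆ j : Fin n, X j ω) ∂μ) ≤ ∫ ω, ((k : ℝ) + ∑ j, max (X j ω - k) 0) ∂μ := by
        apply integral_mono hi ((integrable_const _).add hS)
        intro ω
        apply ciSup_le
        intro j
        have h := Finset.single_le_sum (f := fun j => max (X j ω - k) 0)
          (fun i _ => le_max_right _ _) (Finset.mem_univ j)
        have h2 := le_max_left (X j ω - k) 0
        simp only [Pi.add_apply] at h ⊢
        linarith
    _ = (k : ℝ) + ∑ j, ∫ ω, max (X j ω - k) 0 ∂μ := by
        rw [integral_add (integrable_const _) hS, integral_finsetSum _ fun j _ => hI j]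
        simp
    _ ≤ (k : ℝ) + ∑ j : Fin n, ((m : ℝ) * p) ^ (k + 1) * Real.exp ((m : ℝ) * p) := by
        gcongr with j; exact hb j
    _ = _ := by simp; ring

end
end

section
/- In the multinomial assignment setting, for every n, E[max_{σ ∈ S_n} Σ_{i=1}^n X_{iσ(i)}] ≥ Σ_{i=1}^{n} E[max_{1≤j≤n−i+1} X_{1j}]; that is, the expected maximum of the assignment process is at least the sum over i from 1 to n of the expected maximum of the first n−i+1 entries of the first row. -/
open MeasureTheory Filter Real

noncomputable section

/-- The first row of the multinomial matrix: `X_{1j}` is the number of points in cell `(1, j)`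
(indexing rows by `Fin n`, the first row is index `0`). -/
def firstRowCount {m n : ℕ} (j : Fin n) (ω : Fin m → Fin n × Fin n) : ℕ :=
  (Finset.univ.filter fun k => ((ω k).1 : ℕ) = 0 ∧ (ω k).2 = j).card

/-- Counts with rows indexed by naturals. -/
def XC {m n : ℕ} (ω : Fin m → Fin n × Fin n) (k : ℕ) (j : Fin n) : ℕ :=
  (Finset.univ.filter fun p => ((ω p).1 : ℕ) = k ∧ (ω p).2 = j).card

lemma pick_exists {n : ℕ} [NeZero n] (A : Finset (Fin n)) (f : Fin n → ℕ) :
    ∃ j : Fin n, A.Nonempty → j ∈ A ∧ f j = A.sup f := by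
  by_cases h : A.Nonempty
  · obtain ⟨j, hj, hj'⟩ := A.exists_mem_eq_sup h f
    exact ⟨j, fun _ => ⟨hj, hj'.symm⟩⟩
  · exact ⟨0, fun h' => absurd h' h⟩

def pick {n : ℕ} [NeZero n] (A : Finset (Fin n)) (f : Fin n → ℕ) : Fin n :=
  (pick_exists A f).choose

lemma pick_spec {n : ℕ} [NeZero n] (A : Finset (Fin n)) (f : Fin n → ℕ) (h : A.Nonempty) :
    pick A f ∈ A ∧ f (pick A f) = A.sup f := (pick_exists A f).choose_spec h

/-- Columns used by the greedy algorithm before row `k`. -/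
def used {n : ℕ} [NeZero n] (c : ℕ → Fin n → ℕ) : ℕ → Finset (Fin n)
  | 0 => ∅
  | k + 1 => insert (pick (used c k)ᶜ (c k)) (used c k)

def gcol {n : ℕ} [NeZero n] (c : ℕ → Fin n → ℕ) (k : ℕ) : Fin n := pick (used c k)ᶜ (c k)

lemma used_card_le {n : ℕ} [NeZero n] (c : ℕ → Fin n → ℕ) (k : ℕ) : (used c k).card ≤ k := by
  induction k with
  | zero => simp [used]
  | succ k ih => exact (Finset.card_insert_le _ _).trans (by omega)

lemma used_compl_nonempty {n : ℕ} [NeZero n] (c : ℕ → Fin n → ℕ) (k : ℕ) (hk : k < n) :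
    (used c k)ᶜ.Nonempty := by
  rw [← Finset.card_pos, Finset.card_compl, Fintype.card_fin]
  have := used_card_le c k
  omega

lemma used_card {n : ℕ} [NeZero n] (c : ℕ → Fin n → ℕ) (k : ℕ) (hk : k ≤ n) :
    (used c k).card = k := by
  induction k with
  | zero => simp [used]
  | succ k ih =>
    have h := (pick_spec _ (c k) (used_compl_nonempty c k hk)).1
    rw [used, Finset.card_insert_of_notMem (Finset.mem_compl.1 h), ih (by omega)]

lemma used_congr {n : ℕ} [NeZero n] (c c' : ℕ → Fin n → ℕ) (k : ℕ)
    (h : ∀ l < k, c l = c' l) : used c k = used c' k := by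
  induction k with
  | zero => rfl
  | succ k ih =>
    rw [used, used, ih (fun l hl => h l (by omega)), h k (by omega)]

lemma gcol_mem_used {n : ℕ} [NeZero n] (c : ℕ → Fin n → ℕ) (l k : ℕ) (h : l < k) :
    gcol c l ∈ used c k := by
  induction k with
  | zero => omega
  | succ k ih =>
    rw [used, Finset.mem_insert]
    rcases Nat.lt_succ_iff_lt_or_eq.1 h with h | rfl
    · exact Or.inr (ih h)
    · exact Or.inl rfl

lemma gcol_ne {n : ℕ} [NeZero n] (c : ℕ → Fin n → ℕ) (l k : ℕ) (h : l < k) (hk : k < n) :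
    gcol c l ≠ gcol c k := by
  intro e
  have h1 := (pick_spec _ (c k) (used_compl_nonempty c k hk)).1
  have h2 := gcol_mem_used c l k h
  rw [e] at h2
  exact Finset.mem_compl.1 h1 h2

lemma greedy_le_max {m n : ℕ} [NeZero n] (ω : Fin m → Fin n × Fin n) :
    ∑ k ∈ Finset.range n, (((used (XC ω) k)ᶜ.sup (XC ω k) : ℕ) : ℝ) ≤ maxAssign ω := by
  have hinj : Function.Injective fun i : Fin n => gcol (XC ω) i := by
    intro a b hab
    by_contra hne
    rcases lt_or_gt_of_ne hne with h | h
    · exact gcol_ne (XC ω) a b h b.2 hab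
    · exact gcol_ne (XC ω) b a h a.2 hab.symm
  let σ : Equiv.Perm (Fin n) := Equiv.ofBijective _ (Finite.injective_iff_bijective.1 hinj)
  have h : assignSum σ ω ≤ maxAssign ω := le_ciSup (f := fun σ => assignSum σ ω)
    (Set.finite_range _).bddAbove σ
  refine le_trans (le_of_eq ?_) h
  rw [← Fin.sum_univ_eq_sum_range (fun k => (((used (XC ω) k)ᶜ.sup (XC ω k) : ℕ) : ℝ)) n]
  unfold assignSum
  refine Finset.sum_congr rfl fun i _ => ?_
  rw [← (pick_spec _ (XC ω i) (used_compl_nonempty (XC ω) i i.2)).2]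
  change ((XC ω i (σ i) : ℕ) : ℝ) = _
  generalize σ i = j
  congr 1
  unfold XC cellCount
  congr 1
  ext p
  simp only [Finset.mem_filter, Finset.mem_univ, true_and, Prod.ext_iff, Fin.ext_iff]

lemma exists_perm {n : ℕ} (A B : Finset (Fin n)) (h : A.card = B.card) :
    ∃ ρ : Equiv.Perm (Fin n), A.map ρ.toEmbedding = B := by
  let e : {x // x ∈ A} ≃ {x // x ∈ B} := Finset.equivOfCardEq h
  refine ⟨e.extendSubtype, ?_⟩
  refine Finset.eq_of_subset_of_card_le ?_ (by simp [h])
  intro x hx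
  obtain ⟨a, ha, rfl⟩ := Finset.mem_map.1 hx
  exact e.extendSubtype_mem a ha

lemma sum_shuffle {m n : ℕ} (k : ℕ) (B : Finset (Fin n))
    (A : (Fin m → Fin n × Fin n) → Finset (Fin n))
    (hc : ∀ ω, (A ω).card = B.card)
    (hA : ∀ ω ω', (∀ l < k, XC ω l = XC ω' l) → A ω = A ω') :
    ∑ ω : Fin m → Fin n × Fin n, (((A ω).sup (XC ω k) : ℕ) : ℝ) =
    ∑ ω : Fin m → Fin n × Fin n, ((B.sup (XC ω k) : ℕ) : ℝ) := by
  have hex : ∃ P : Finset (Fin n) → Equiv.Perm (Fin n),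
      ∀ S : Finset (Fin n), S.card = B.card → S.map (P S).toEmbedding = B := by
    have : ∀ S : Finset (Fin n), ∃ ρ : Equiv.Perm (Fin n),
        S.card = B.card → S.map ρ.toEmbedding = B := fun S => by
      by_cases h : S.card = B.card
      · obtain ⟨ρ, hρ⟩ := exists_perm S B h
        exact ⟨ρ, fun _ => hρ⟩
      · exact ⟨1, fun h' => absurd h' h⟩
    choose P hP using this
    exact ⟨P, hP⟩
  obtain ⟨P, hP⟩ := hex
  let T : (Fin m → Fin n × Fin n) → (Fin m → Fin n × Fin n) := fun ω p =>
    ((ω p).1, if ((ω p).1 : ℕ) = k then P (A ω) (ω p).2 else (ω p).2)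
  have hlow : ∀ ω, ∀ l < k, XC (T ω) l = XC ω l := by
    intro ω l hl
    funext j
    unfold XC
    congr 1
    ext p
    simp only [Finset.mem_filter, Finset.mem_univ, true_and, T]
    refine and_congr_right fun h => ?_
    rw [if_neg (by omega)]
  have hinj : Function.Injective T := by
    intro ω ω' h
    have hAA : A ω = A ω' := hA _ _ fun l hl => by
      rw [← hlow ω l hl, ← hlow ω' l hl, h]
    funext p
    have hp := congrFun h p
    simp only [T, Prod.mk.injEq, hAA] at hp
    obtain ⟨h1, h2⟩ := hp
    rw [h1] at h2
    refine Prod.ext h1 ?_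
    split_ifs at h2
    · exact (P (A ω')).injective h2
    · exact h2
  have hbij := Finite.injective_iff_bijective.1 hinj
  rw [← hbij.sum_comp (fun ω => ((B.sup (XC ω k) : ℕ) : ℝ))]
  refine Finset.sum_congr rfl fun ω _ => ?_
  congr 1
  conv_rhs => rw [← hP (A ω) (hc ω)]
  rw [Finset.sup_map]
  refine Finset.sup_congr rfl fun j _ => ?_
  simp only [Function.comp, Equiv.coe_toEmbedding]
  unfold XC
  congr 1
  ext p
  simp only [Finset.mem_filter, Finset.mem_univ, true_and, T]
  refine and_congr_right fun h => ?_
  rw [if_pos h, (P (A ω)).injective.eq_iff]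

lemma sum_swap {m n : ℕ} [NeZero n] (k : ℕ) (hk : k < n) (B : Finset (Fin n)) :
    ∑ ω : Fin m → Fin n × Fin n, ((B.sup (XC ω k) : ℕ) : ℝ) =
    ∑ ω : Fin m → Fin n × Fin n, ((B.sup (XC ω 0) : ℕ) : ℝ) := by
  let s : Equiv.Perm (Fin n) := Equiv.swap 0 ⟨k, hk⟩
  let T : (Fin m → Fin n × Fin n) → (Fin m → Fin n × Fin n) := fun ω p =>
    (s (ω p).1, (ω p).2)
  have hinj : Function.Injective T := by
    intro ω ω' h
    funext p
    have hp := congrFun h p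
    simp only [T, Prod.mk.injEq, s.injective.eq_iff] at hp
    exact Prod.ext hp.1 hp.2
  have hbij := Finite.injective_iff_bijective.1 hinj
  rw [← hbij.sum_comp (fun ω => ((B.sup (XC ω 0) : ℕ) : ℝ))]
  refine Finset.sum_congr rfl fun ω _ => ?_
  congr 1
  refine Finset.sup_congr rfl fun j _ => ?_
  unfold XC
  congr 1
  ext p
  simp only [Finset.mem_filter, Finset.mem_univ, true_and, T]
  refine and_congr_left fun _ => ?_
  have h0 : ((s (ω p).1 : Fin n) : ℕ) = 0 ↔ s (ω p).1 = 0 := by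
    rw [Fin.ext_iff]; simp
  have hs : s ⟨k, hk⟩ = 0 := Equiv.swap_apply_right _ _
  rw [h0, ← hs, s.injective.eq_iff, Fin.ext_iff]

lemma integral_grid {m n : ℕ} [NeZero n] (f : (Fin m → Fin n × Fin n) → ℝ) :
    ∫ ω, f ω ∂(gridMeasure m n) = ((((n : ENNReal) ^ 2)⁻¹) ^ m).toReal * ∑ ω, f ω := by
  have hn : (n : ENNReal) ≠ 0 := by exact_mod_cast NeZero.ne n
  have hfin : IsFiniteMeasure (cellMeasure n) := by
    constructor
    unfold cellMeasure
    rw [Measure.smul_apply, smul_eq_mul]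
    refine ENNReal.mul_lt_top ?_ ?_
    · exact ENNReal.inv_lt_top.2 (pos_iff_ne_zero.2 (pow_ne_zero _ hn))
    · exact measure_lt_top _ _
  have : IsFiniteMeasure (gridMeasure m n) := by unfold gridMeasure; infer_instance
  rw [integral_fintype (Integrable.of_finite), Finset.mul_sum]
  refine Finset.sum_congr rfl fun ω _ => ?_
  rw [smul_eq_mul]
  congr 1
  rw [measureReal_def]
  congr 1
  unfold gridMeasure
  rw [Measure.pi_singleton]
  simp [cellMeasure]

/-- **Greedy lower bound.**  For every `n` and `m`,
`E[max_σ ∑ i, X_{i σ(i)}] ≥ ∑_{i=1}^{n} E[max_{1 ≤ j ≤ n-i+1} X_{1j}]`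
(the term for `i` is the expected maximum of the first `n - i + 1` entries of the
first row; below the sum runs over `i ∈ {0, …, n-1}` and uses `n - i` entries). -/
theorem greedy_lower_bound (m n : ℕ) :
    ∑ i ∈ Finset.range n,
      ∫ ω, (((Finset.univ.filter fun j : Fin n => (j : ℕ) < n - i).sup
        fun j => firstRowCount j ω : ℕ) : ℝ) ∂(gridMeasure m n) ≤
      EmaxAssign m n := by
  rcases Nat.eq_zero_or_pos n with rfl | hn
  · simp only [Finset.range_zero, Finset.sum_empty]
    refine integral_nonneg fun ω => ?_
    exact Real.iSup_nonneg fun σ => Finset.sum_nonneg fun i _ => Nat.cast_nonneg _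
  have : NeZero n := ⟨hn.ne'⟩
  unfold EmaxAssign
  simp only [integral_grid]
  rw [← Finset.mul_sum]
  refine mul_le_mul_of_nonneg_left ?_ ENNReal.toReal_nonneg
  refine le_trans (le_of_eq ?_) (Finset.sum_le_sum fun ω _ => greedy_le_max ω)
  conv_rhs => rw [Finset.sum_comm]
  refine Finset.sum_congr rfl fun k hk => ?_
  have hk' := Finset.mem_range.1 hk
  symm
  refine (sum_shuffle k (Finset.univ.filter fun j : Fin n => (j : ℕ) < n - k)
    (fun ω => (used (XC ω) k)ᶜ) ?_ ?_).trans (sum_swap k hk' _)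
  · intro ω
    rw [Finset.card_compl, Fintype.card_fin, used_card _ _ hk'.le, Fin.card_filter_val_lt]
    omega
  · intro ω ω' h
    simp only [used_congr _ _ _ h]

end
end
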